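/- arXiv:2602.14268 — 7 statements merged into one kernel-verified Lean document; each statement's English description precedes it below -/
import Mathlib

section
/- Let K be a real Banach space, let L ≥ 0, h > 0, and let y : ℝ → K be differentiable on [t₀ - h, t₀ + h] with derivative y' satisfying ‖y'(t) - y'(s)‖ ≤ L·|t - s|^(1/2) for all s, t in [t₀ - h, t₀ + h]. Then the symmetric averaging defect satisfies ‖(1/(2h)) ∫_{t₀-h}^{t₀+h} y(θ) dθ - y(t₀)‖ ≤ (4/15)·L·h^(3/2). -/
open MeasureTheory Set intervalIntegral

/-- Mid-cell averaging defect for a function with 1/2-Hölder derivative: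
`‖(1/(2h)) ∫_{t₀-h}^{t₀+h} y(θ) dθ - y(t₀)‖ ≤ (4/15) L h^{3/2}`. -/
theorem midpoint_average_defect
    {K : Type*} [NormedAddCommGroup K] [NormedSpace ℝ K] [CompleteSpace K]
    (L h t₀ : ℝ) (hL : 0 ≤ L) (hh : 0 < h)
    (y y' : ℝ → K)
    (hderiv : ∀ t ∈ Icc (t₀ - h) (t₀ + h),
      HasDerivWithinAt y (y' t) (Icc (t₀ - h) (t₀ + h)) t)
    (hhold : ∀ s ∈ Icc (t₀ - h) (t₀ + h), ∀ t ∈ Icc (t₀ - h) (t₀ + h),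
      ‖y' t - y' s‖ ≤ L * |t - s| ^ ((1 : ℝ) / 2)) :
    ‖(1 / (2 * h)) • (∫ θ in (t₀ - h)..(t₀ + h), y θ) - y t₀‖
      ≤ (4 / 15) * L * h ^ ((3 : ℝ) / 2) := by
  have hmem : ∀ u ∈ Icc (0:ℝ) h, t₀ + u ∈ Icc (t₀ - h) (t₀ + h) ∧
      t₀ - u ∈ Icc (t₀ - h) (t₀ + h) := by
    rintro u ⟨h0, h1⟩
    exact ⟨⟨by linarith, by linarith⟩, ⟨by linarith, by linarith⟩⟩
  have ht0 : t₀ ∈ Icc (t₀ - h) (t₀ + h) := ⟨by linarith, by linarith⟩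
  have hyc : ContinuousOn y (Icc (t₀ - h) (t₀ + h)) := fun t ht => (hderiv t ht).continuousWithinAt
  have hcp : ContinuousOn (fun u => y (t₀ + u)) (Icc 0 h) :=
    hyc.comp (by fun_prop) (fun u hu => (hmem u hu).1)
  have hcm : ContinuousOn (fun u => y (t₀ - u)) (Icc 0 h) :=
    hyc.comp (by fun_prop) (fun u hu => (hmem u hu).2)
  have hcφ : ContinuousOn (fun u => y (t₀ + u) + y (t₀ - u) - (2:ℝ) • y t₀) (Icc 0 h) :=
    (hcp.add hcm).sub continuousOn_const
  have hdφ : ∀ u ∈ Icc (0:ℝ) h, HasDerivWithinAt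
      (fun u => y (t₀ + u) + y (t₀ - u) - (2:ℝ) • y t₀) (y' (t₀ + u) - y' (t₀ - u)) (Icc 0 h) u := by
    intro u hu
    have h1 : HasDerivWithinAt (fun u => y (t₀ + u)) ((1:ℝ) • y' (t₀ + u)) (Icc 0 h) u :=
      HasDerivWithinAt.scomp (h := fun u => t₀ + u) u (hderiv _ (hmem u hu).1)
        ((hasDerivWithinAt_id u _).const_add t₀) (fun v hv => (hmem v hv).1)
    have h2 : HasDerivWithinAt (fun u => y (t₀ - u)) ((-1:ℝ) • y' (t₀ - u)) (Icc 0 h) u :=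
      HasDerivWithinAt.scomp (h := fun u => t₀ - u) u (hderiv _ (hmem u hu).2)
        ((hasDerivWithinAt_id u _).const_sub t₀) (fun v hv => (hmem v hv).2)
    have h3 := (h1.add h2).sub_const ((2:ℝ) • y t₀)
    rw [one_smul, neg_one_smul, ← sub_eq_add_neg] at h3
    exact h3
  have hφ : ∀ u ∈ Icc (0:ℝ) h, ‖y (t₀ + u) + y (t₀ - u) - (2:ℝ) • y t₀‖
      ≤ (4 / 3 * L) * u ^ ((3:ℝ) / 2) := by
    intro u hu
    refine image_norm_le_of_norm_deriv_right_le_deriv_boundary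
      (f := fun u => y (t₀ + u) + y (t₀ - u) - (2:ℝ) • y t₀)
      (f' := fun u => y' (t₀ + u) - y' (t₀ - u))
      (B := fun u => (4 / 3 * L) * u ^ ((3:ℝ) / 2))
      (B' := fun u => (4 / 3 * L) * ((3 / 2) * u ^ ((3:ℝ) / 2 - 1)))
      hcφ (fun x hx => ?_) ?_ (fun x => ?_) (fun x hx => ?_) hu
    · exact (hdφ x ⟨hx.1, hx.2.le⟩).mono_of_mem_nhdsWithin (Icc_mem_nhdsGE_of_mem hx)
    · simp [two_smul]
    · exact (Real.hasDerivAt_rpow_const (Or.inr (by norm_num))).const_mul _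
    · have hx' := hmem x ⟨hx.1, hx.2.le⟩
      have e1 := hhold _ ht0 _ hx'.1
      have e2 := hhold _ hx'.2 _ ht0
      have e3 := norm_sub_le_norm_sub_add_norm_sub (y' (t₀ + x)) (y' t₀) (y' (t₀ - x))
      rw [show t₀ + x - t₀ = x by ring, abs_of_nonneg hx.1] at e1
      rw [show t₀ - (t₀ - x) = x by ring, abs_of_nonneg hx.1] at e2
      norm_num at e1 e2 ⊢
      linarith
  have hip : IntervalIntegrable (fun u => y (t₀ + u)) volume 0 h :=
    ContinuousOn.intervalIntegrable_of_Icc hh.le hcp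
  have him : IntervalIntegrable (fun u => y (t₀ - u)) volume 0 h :=
    ContinuousOn.intervalIntegrable_of_Icc hh.le hcm
  have hsplit : (∫ θ in (t₀ - h)..(t₀ + h), y θ)
      = (∫ θ in (t₀ - h)..t₀, y θ) + ∫ θ in t₀..(t₀ + h), y θ := by
    refine (integral_add_adjacent_intervals ?_ ?_).symm
    · exact ContinuousOn.intervalIntegrable_of_Icc (by linarith)
        (hyc.mono (Icc_subset_Icc_right (by linarith)))
    · exact ContinuousOn.intervalIntegrable_of_Icc (by linarith)
        (hyc.mono (Icc_subset_Icc_left (by linarith)))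
  have hint : (∫ u in (0:ℝ)..h, (y (t₀ + u) + y (t₀ - u) - (2:ℝ) • y t₀))
      = (∫ θ in (t₀ - h)..(t₀ + h), y θ) - (2 * h) • y t₀ := by
    rw [intervalIntegral.integral_sub (hip.add him) (by simp),
      intervalIntegral.integral_add hip him, hsplit,
      intervalIntegral.integral_comp_add_left, intervalIntegral.integral_comp_sub_left,
      intervalIntegral.integral_const, smul_smul]
    simp only [add_zero, sub_zero]
    rw [add_comm (∫ θ in t₀..(t₀ + h), y θ), mul_comm h 2]
  have hbound : ‖∫ u in (0:ℝ)..h, (y (t₀ + u) + y (t₀ - u) - (2:ℝ) • y t₀)‖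
      ≤ ∫ u in (0:ℝ)..h, (4 / 3 * L) * u ^ ((3:ℝ) / 2) := by
    refine intervalIntegral.norm_integral_le_of_norm_le hh.le ?_ ?_
    · exact Filter.Eventually.of_forall (fun u hu => hφ u ⟨hu.1.le, hu.2⟩)
    · exact (intervalIntegrable_rpow' (by norm_num)).const_mul _
  rw [hint, intervalIntegral.integral_const_mul, integral_rpow (Or.inl (by norm_num)),
    Real.zero_rpow (by norm_num), Real.rpow_add hh, Real.rpow_one] at hbound
  have hfin : (1 / (2 * h)) • (∫ θ in (t₀ - h)..(t₀ + h), y θ) - y t₀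
      = (1 / (2 * h)) • ((∫ θ in (t₀ - h)..(t₀ + h), y θ) - (2 * h) • y t₀) := by
    rw [smul_sub, smul_smul, one_div_mul_cancel (by positivity), one_smul]
  rw [hfin, norm_smul, Real.norm_of_nonneg (by positivity)]
  refine (mul_le_mul_of_nonneg_left hbound (by positivity)).trans (le_of_eq ?_)
  field_simp
  ring
end

section
/- Let K be a real Banach space, let L ≥ 0, h > 0, and let y : ℝ → K be differentiable on [t₀ - 3h, t₀] with derivative y' satisfying ‖y'(t) - y'(s)‖ ≤ L·|t - s|^(1/2) for all s, t in [t₀ - 3h, t₀]. Then the BDF2 extrapolation defect satisfies ‖y(t₀) - (3/2)·y(t₀ - h) + (1/2)·y(t₀ - 3h)‖ ≤ L·( (2/3)·h^(3/2) + (1/3)·((3h)^(3/2) - h^(3/2)) ). -/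
open MeasureTheory Set intervalIntegral

theorem bdf2_aux
    {K : Type*} [NormedAddCommGroup K] [NormedSpace ℝ K]
    (L r t₀ : ℝ) (y y' : ℝ → K)
    (hderiv : ∀ t ∈ Icc r t₀, HasDerivWithinAt y (y' t) (Icc r t₀) t)
    (hhold : ∀ s ∈ Icc r t₀, ∀ t ∈ Icc r t₀,
      ‖y' t - y' s‖ ≤ L * |t - s| ^ ((1 : ℝ) / 2))
    (a b : ℝ) (hra : r ≤ a) (hab : a ≤ b) (hb : b ≤ t₀) :
    ‖y b - y a - (b - a) • y' t₀‖
      ≤ L * (2 / 3) * ((t₀ - a) ^ ((3 : ℝ) / 2) - (t₀ - b) ^ ((3 : ℝ) / 2)) := by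
  have hsub : Icc a b ⊆ Icc r t₀ := Icc_subset_Icc hra hb
  have key := image_norm_le_of_norm_deriv_right_le_deriv_boundary (a := a) (b := b)
    (f := fun t => y t - y a - (t - a) • y' t₀) (f' := fun t => y' t - y' t₀)
    (B := fun t => L * (2 / 3) * ((t₀ - a) ^ ((3 : ℝ) / 2) - (t₀ - t) ^ ((3 : ℝ) / 2)))
    (B' := fun t => L * (t₀ - t) ^ ((1 : ℝ) / 2)) ?_ ?_ ?_ ?_ ?_
  · exact key (right_mem_Icc.2 hab)
  · have h1 : ContinuousOn y (Icc a b) := fun t ht =>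
      ((hderiv t (hsub ht)).continuousWithinAt).mono hsub
    fun_prop
  · intro x hx
    have hx' : x ∈ Icc r t₀ := hsub (Ico_subset_Icc_self hx)
    have h1 : HasDerivWithinAt y (y' x) (Ici x) x := by
      refine (hderiv x hx').mono_of_mem_nhdsWithin ?_
      exact Filter.mem_of_superset (Icc_mem_nhdsGE (hx.2.trans_le hb))
        (Icc_subset_Icc_left hx'.1)
    have h2 : HasDerivWithinAt (fun t : ℝ => (t - a) • y' t₀) ((1 : ℝ) • y' t₀) (Ici x) x :=
      (((hasDerivAt_id x).sub_const a).smul_const (y' t₀)).hasDerivWithinAt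
    have h3 := (h1.sub_const (y a)).sub h2
    rw [one_smul] at h3
    exact h3
  · simp
  · intro x
    have h1 : HasDerivAt (fun t : ℝ => t₀ - t) (-1) x := by
      simpa using (hasDerivAt_id x).const_sub t₀
    have h2 := ((h1.rpow_const (p := (3 : ℝ) / 2) (Or.inr (by norm_num))).const_sub
      ((t₀ - a) ^ ((3 : ℝ) / 2))).const_mul (L * (2 / 3))
    have e : L * (2 / 3) * -(-1 * (3 / 2) * (t₀ - x) ^ ((3 : ℝ) / 2 - 1))
        = L * (t₀ - x) ^ ((1 : ℝ) / 2) := by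
      rw [show (3 : ℝ) / 2 - 1 = 1 / 2 by norm_num]
      ring
    rw [e] at h2
    exact h2
  · intro x hx
    have hx' : x ∈ Icc r t₀ := hsub (Ico_subset_Icc_self hx)
    have := hhold t₀ (right_mem_Icc.2 (hx'.1.trans hx'.2)) x hx'
    rwa [abs_sub_comm, abs_of_nonneg (sub_nonneg.2 hx'.2)] at this

/-- BDF2 extrapolation defect for a function with 1/2-Hölder derivative:
`‖y(t₀) - (3/2) y(t₀-h) + (1/2) y(t₀-3h)‖ ≤ L ((2/3) h^{3/2} + (1/3)((3h)^{3/2} - h^{3/2}))`. -/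
theorem bdf2_extrapolation_defect
    {K : Type*} [NormedAddCommGroup K] [NormedSpace ℝ K] [CompleteSpace K]
    (L h t₀ : ℝ) (hL : 0 ≤ L) (hh : 0 < h)
    (y y' : ℝ → K)
    (hderiv : ∀ t ∈ Icc (t₀ - 3 * h) t₀,
      HasDerivWithinAt y (y' t) (Icc (t₀ - 3 * h) t₀) t)
    (hhold : ∀ s ∈ Icc (t₀ - 3 * h) t₀, ∀ t ∈ Icc (t₀ - 3 * h) t₀,
      ‖y' t - y' s‖ ≤ L * |t - s| ^ ((1 : ℝ) / 2)) :
    ‖y t₀ - (3 / 2 : ℝ) • y (t₀ - h) + (1 / 2 : ℝ) • y (t₀ - 3 * h)‖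
      ≤ L * ((2 / 3) * h ^ ((3 : ℝ) / 2)
          + (1 / 3) * ((3 * h) ^ ((3 : ℝ) / 2) - h ^ ((3 : ℝ) / 2))) := by
  have h1 := bdf2_aux L _ t₀ y y' hderiv hhold (t₀ - h) t₀ (by linarith) (by linarith) le_rfl
  have h2 := bdf2_aux L _ t₀ y y' hderiv hhold (t₀ - 3 * h) (t₀ - h) le_rfl
    (by linarith) (by linarith)
  rw [sub_self, Real.zero_rpow (by norm_num), sub_sub_cancel] at h1
  rw [sub_sub_cancel, sub_sub_cancel] at h2
  have e : y t₀ - (3 / 2 : ℝ) • y (t₀ - h) + (1 / 2 : ℝ) • y (t₀ - 3 * h)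
      = (y t₀ - y (t₀ - h) - h • y' t₀) - (1 / 2 : ℝ) •
        (y (t₀ - h) - y (t₀ - 3 * h) - (t₀ - h - (t₀ - 3 * h)) • y' t₀) := by
    module
  rw [e]
  refine (norm_sub_le _ _).trans ?_
  rw [norm_smul, Real.norm_of_nonneg (by norm_num : (0 : ℝ) ≤ 1 / 2)]
  linarith
end

section
/- Let K be a real Banach space, let T > 0, L ≥ 0, τ > 0, and let y : ℝ → K be differentiable on [0, T] with derivative y' satisfying ‖y'(t) - y'(s)‖ ≤ L·|t - s|^(1/2) for all s, t ∈ [0, T]. Then there exists an absolute constant C > 0 (independent of y, L, τ, T, K) such that for every tₙ with [tₙ - τ, tₙ + τ] ⊆ [0, T], the combined extrapolation error satisfies ‖ (1/τ) ∫_{tₙ}^{tₙ+τ} y(s) ds - ( (3/2)·y(tₙ) - (1/2)·y(tₙ - τ) ) ‖ ≤ C·L·τ^(3/2). -/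
open MeasureTheory Set intervalIntegral

universe u

/-- Combined midpoint-averaging/BDF2 extrapolation error: there is an absolute
constant `C > 0` such that for any Banach space `K`, any `y` with 1/2-Hölder
derivative on `[0,T]` and any `tₙ` with `[tₙ-τ, tₙ+τ] ⊆ [0,T]`,
`‖(1/τ) ∫_{tₙ}^{tₙ+τ} y(s) ds - ((3/2) y(tₙ) - (1/2) y(tₙ-τ))‖ ≤ C L τ^{3/2}`. -/
theorem bdf2_average_extrapolation_error :
    ∃ C : ℝ, 0 < C ∧
      ∀ (K : Type u) [NormedAddCommGroup K] [NormedSpace ℝ K] [CompleteSpace K]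
        (T L τ : ℝ), 0 < T → 0 ≤ L → 0 < τ →
      ∀ (y y' : ℝ → K),
        (∀ t ∈ Icc (0 : ℝ) T, HasDerivWithinAt y (y' t) (Icc (0 : ℝ) T) t) →
        (∀ s ∈ Icc (0 : ℝ) T, ∀ t ∈ Icc (0 : ℝ) T,
          ‖y' t - y' s‖ ≤ L * |t - s| ^ ((1 : ℝ) / 2)) →
      ∀ tₙ : ℝ, Icc (tₙ - τ) (tₙ + τ) ⊆ Icc (0 : ℝ) T →
        ‖(1 / τ) • (∫ s in tₙ..(tₙ + τ), y s)
            - ((3 / 2 : ℝ) • y tₙ - (1 / 2 : ℝ) • y (tₙ - τ))‖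
          ≤ C * L * τ ^ ((3 : ℝ) / 2) := by
  refine ⟨3 / 2, by norm_num, ?_⟩
  intro K _ _ _ T L τ hT hL hτ y y' hy hy' t hsub
  have ht : t ∈ Icc (t - τ) (t + τ) := ⟨by linarith, by linarith⟩
  set M : ℝ := L * τ ^ ((1 : ℝ) / 2) with hM
  have hM0 : 0 ≤ M := by positivity
  have hpow : τ ^ ((3 : ℝ) / 2) = τ ^ ((1 : ℝ) / 2) * τ := by
    rw [show ((3 : ℝ) / 2) = 1 / 2 + 1 by norm_num, Real.rpow_add hτ, Real.rpow_one]
  have hR : ∀ s ∈ Icc (t - τ) (t + τ), ‖y s - y t - (s - t) • y' t‖ ≤ M * τ := by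
    intro s hs
    have habs : ∀ x ∈ Icc (t - τ) (t + τ), |x - t| ≤ τ := fun x hx =>
      abs_le.2 ⟨by linarith [hx.1], by linarith [hx.2]⟩
    have h := (convex_Icc (t - τ) (t + τ)).norm_image_sub_le_of_norm_hasDerivWithin_le
      (f := fun s => y s - s • y' t) (f' := fun s => y' s - (1 : ℝ) • y' t) (C := M)
      (fun x hx => ((hy x (hsub hx)).mono hsub).sub
        ((hasDerivWithinAt_id x _).smul_const (y' t)))
      (fun x hx => by
        rw [one_smul]
        refine (hy' t (hsub ht) x (hsub hx)).trans ?_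
        exact mul_le_mul_of_nonneg_left
          (Real.rpow_le_rpow (abs_nonneg _) (habs x hx) (by norm_num)) hL) ht hs
    have e : y s - y t - (s - t) • y' t = (y s - s • y' t) - (y t - t • y' t) := by
      rw [sub_smul]; abel
    rw [e]
    refine h.trans ?_
    rw [Real.norm_eq_abs]
    exact mul_le_mul_of_nonneg_left (habs s hs) hM0
  have hsub2 : Icc t (t + τ) ⊆ Icc (t - τ) (t + τ) := Icc_subset_Icc_left (by linarith)
  have hint : IntervalIntegrable y volume t (t + τ) := by
    apply ContinuousOn.intervalIntegrable
    rw [uIcc_of_le (by linarith)]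
    intro x hx
    exact ((hy x (hsub (hsub2 hx))).continuousWithinAt).mono (hsub2.trans hsub)
  have hI : ‖∫ s in t..(t + τ), (y s - y t - (s - t) • y' t)‖ ≤ M * τ * τ := by
    have h := intervalIntegral.norm_integral_le_of_norm_le_const (a := t) (b := t + τ)
      (f := fun s => y s - y t - (s - t) • y' t) (C := M * τ) (fun x hx => by
        rw [uIoc_of_le (by linarith)] at hx
        exact hR x (hsub2 (Ioc_subset_Icc_self hx)))
    rwa [add_sub_cancel_left, abs_of_pos hτ] at h
  have hlin : ∫ s in t..(t + τ), (s - t) = τ ^ 2 / 2 := by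
    rw [intervalIntegral.integral_sub (by simp) (by simp)]
    simp
    ring
  have hIe : ∫ s in t..(t + τ), (y s - y t - (s - t) • y' t)
      = (∫ s in t..(t + τ), y s) - τ • y t - (τ ^ 2 / 2) • y' t := by
    rw [intervalIntegral.integral_sub (hint.sub (by simp))
      (Continuous.intervalIntegrable (by fun_prop) _ _),
      intervalIntegral.integral_sub hint (by simp), intervalIntegral.integral_smul_const, hlin]
    simp
  have hB := hR (t - τ) ⟨le_rfl, by linarith⟩
  have key : (1 / τ) • (∫ s in t..(t + τ), y s)
            - ((3 / 2 : ℝ) • y t - (1 / 2 : ℝ) • y (t - τ))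
      = (1 / τ) • (∫ s in t..(t + τ), (y s - y t - (s - t) • y' t))
        + (1 / 2 : ℝ) • (y (t - τ) - y t - (t - τ - t) • y' t) := by
    rw [hIe]
    generalize (∫ s in t..(t + τ), y s) = I
    match_scalars <;> field_simp <;> ring
  rw [key]
  refine (norm_add_le _ _).trans ?_
  rw [norm_smul, norm_smul, Real.norm_of_nonneg (by positivity : (0 : ℝ) ≤ 1 / τ),
    Real.norm_of_nonneg (by norm_num : (0 : ℝ) ≤ 1 / 2)]
  have h1 : 1 / τ * ‖∫ s in t..(t + τ), (y s - y t - (s - t) • y' t)‖ ≤ M * τ := by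
    refine (mul_le_mul_of_nonneg_left hI (by positivity)).trans (le_of_eq ?_)
    field_simp
  have e : 3 / 2 * L * τ ^ ((3 : ℝ) / 2) = 3 / 2 * (M * τ) := by
    rw [hpow, hM]; ring
  rw [e]
  linarith
end

section
/- Let (Ω, 𝔉, ℙ) be a probability space and let W : [0, ∞) × Ω → ℝ be a jointly measurable stochastic process such that W(t) is square-integrable for each t, 𝔼[W(t)] = 0 for all t ≥ 0, and 𝔼[W(s)·W(t)] = min(s, t) for all s, t ≥ 0. Let a ≥ 0, M a positive integer, h > 0, and τ := M·h. Then the mean-square error between the time average of W over [a, a+τ] and its right-endpoint Riemann sum on the fine mesh of step h satisfies 𝔼[ ( (1/τ) ∫_a^{a+τ} W(s) ds - (1/M) Σ_{ℓ=1}^{M} W(a + ℓ·h) )² ] = h²/(3τ). In particular, if h = τ² (so M = 1/τ for τ the reciprocal of a positive integer), this error equals τ³/3, hence is at most τ³. -/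
open MeasureTheory Set intervalIntegral

/-- Fubini for products of time integrals of two processes with bounded second moment. -/
lemma fubini_aux {Ω : Type*} [MeasurableSpace Ω] (ℙ : Measure Ω) [IsProbabilityMeasure ℙ]
    (F G : ℝ → Ω → ℝ) (hF : Measurable fun p : ℝ × Ω => F p.1 p.2)
    (hG : Measurable fun p : ℝ × Ω => G p.1 p.2) (S T : Set ℝ)
    (hS : MeasurableSet S) (hT : MeasurableSet T) (hSf : volume S ≠ ⊤) (hTf : volume T ≠ ⊤)
    (C : ℝ)
    (hFi : ∀ s ∈ S, Integrable (fun ω => (F s ω) ^ 2) ℙ)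
    (hGi : ∀ s ∈ T, Integrable (fun ω => (G s ω) ^ 2) ℙ)
    (hFC : ∀ s ∈ S, ∫ ω, (F s ω) ^ 2 ∂ℙ ≤ C)
    (hGC : ∀ s ∈ T, ∫ ω, (G s ω) ^ 2 ∂ℙ ≤ C) :
    Integrable (fun ω => (∫ s in S, F s ω) * ∫ t in T, G t ω) ℙ ∧
    ∫ ω, (∫ s in S, F s ω) * (∫ t in T, G t ω) ∂ℙ =
      ∫ p in S ×ˢ T, (∫ ω, F p.1 ω * G p.2 ω ∂ℙ) := by
  have : IsFiniteMeasure (volume.restrict S) := ⟨by simpa using hSf.lt_top⟩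
  have : IsFiniteMeasure (volume.restrict T) := ⟨by simpa using hTf.lt_top⟩
  have hpr : (volume.restrict S).prod (volume.restrict T)
      = (volume : Measure (ℝ × ℝ)).restrict (S ×ˢ T) := by
    rw [Measure.prod_restrict]; rfl
  have hm : Measurable fun q : (ℝ × ℝ) × Ω => F q.1.1 q.2 * G q.1.2 q.2 := by
    apply Measurable.mul
    · exact hF.comp (by fun_prop : Measurable fun q : (ℝ × ℝ) × Ω => (q.1.1, q.2))
    · exact hG.comp (by fun_prop : Measurable fun q : (ℝ × ℝ) × Ω => (q.1.2, q.2))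
  have hFm : ∀ s, Measurable (F s) := fun s => hF.comp measurable_prodMk_left
  have hGm : ∀ s, Measurable (G s) := fun s => hG.comp measurable_prodMk_left
  have hpt : ∀ s t ω, ‖F s ω * G t ω‖ ≤ (F s ω) ^ 2 + (G t ω) ^ 2 := by
    intro s t ω
    rw [Real.norm_eq_abs, abs_mul]
    nlinarith [sq_nonneg (|F s ω| - |G t ω|), sq_abs (F s ω), sq_abs (G t ω),
      sq_nonneg (F s ω), sq_nonneg (G t ω)]
  have hint : ∀ s ∈ S, ∀ t ∈ T, Integrable (fun ω => F s ω * G t ω) ℙ := by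
    intro s hs t ht
    refine ((hFi s hs).add (hGi t ht)).mono' ((hFm s).mul (hGm t)).aestronglyMeasurable ?_
    exact Filter.Eventually.of_forall (hpt s t)
  have hmem : ∀ᵐ p ∂((volume.restrict S).prod (volume.restrict T)), p ∈ S ×ˢ T := by
    rw [hpr]; exact ae_restrict_mem (hS.prod hT)
  have hI : Integrable (fun q : (ℝ × ℝ) × Ω => F q.1.1 q.2 * G q.1.2 q.2)
      (((volume.restrict S).prod (volume.restrict T)).prod ℙ) := by
    rw [integrable_prod_iff hm.aestronglyMeasurable]
    refine ⟨?_, ?_⟩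
    · filter_upwards [hmem] with p hp
      exact hint _ hp.1 _ hp.2
    · refine Integrable.mono' (integrable_const (C + C))
        (hm.norm.stronglyMeasurable.integral_prod_right').aestronglyMeasurable ?_
      filter_upwards [hmem] with p hp
      rw [Real.norm_of_nonneg (integral_nonneg fun _ => norm_nonneg _)]
      calc _ ≤ ∫ ω, ((F p.1 ω) ^ 2 + (G p.2 ω) ^ 2) ∂ℙ :=
            integral_mono (hint _ hp.1 _ hp.2).norm ((hFi _ hp.1).add (hGi _ hp.2))
              (hpt _ _)
        _ = _ := integral_add (hFi _ hp.1) (hGi _ hp.2)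
        _ ≤ C + C := add_le_add (hFC _ hp.1) (hGC _ hp.2)
  have heq : ∀ ω, (∫ s in S, F s ω) * (∫ t in T, G t ω)
      = ∫ p, F p.1 ω * G p.2 ω ∂((volume.restrict S).prod (volume.restrict T)) := by
    intro ω
    exact (integral_prod_mul (fun s => F s ω) (fun t => G t ω)).symm
  simp_rw [heq]
  refine ⟨hI.integral_prod_right, ?_⟩
  rw [← hpr]
  exact (integral_integral_swap hI).symm

lemma kernel_diag (l r : ℝ) (hlr : l ≤ r) :
    ∫ p in (Ioc l r) ×ˢ (Ioc l r), (r - max p.1 p.2 : ℝ) = (r - l) ^ 3 / 3 := by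
  have hc : Continuous fun p : ℝ × ℝ => (r - max p.1 p.2 : ℝ) := by fun_prop
  have hi : IntegrableOn (fun p : ℝ × ℝ => (r - max p.1 p.2 : ℝ)) ((Ioc l r) ×ˢ (Ioc l r)) :=
    (hc.continuousOn.integrableOn_compact
      ((isCompact_Icc (a := l) (b := r)).prod (isCompact_Icc (a := l) (b := r)))).mono_set
      (prod_mono Ioc_subset_Icc_self Ioc_subset_Icc_self)
  rw [show (volume : Measure (ℝ × ℝ)) = volume.prod volume from rfl] at hi ⊢
  rw [setIntegral_prod _ hi]
  have hin : ∀ s ∈ Ioc l r, ∫ t in Ioc l r, (r - max s t : ℝ)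
      = (r - s) * (s - l) + (r - s) ^ 2 / 2 := by
    intro s hs
    have hcs : Continuous fun t : ℝ => (r - max s t : ℝ) := by fun_prop
    rw [← integral_of_le hlr, ← integral_add_adjacent_intervals
      (hcs.intervalIntegrable l s) (hcs.intervalIntegrable s r)]
    have h1 : ∫ t in l..s, (r - max s t : ℝ) = ∫ t in l..s, (r - s) := by
      apply integral_congr
      intro t ht
      rw [uIcc_of_le hs.1.le] at ht
      simp [max_eq_left ht.2]
    have h2 : ∫ t in s..r, (r - max s t : ℝ) = ∫ t in s..r, (r - t) := by
      apply integral_congr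
      intro t ht
      rw [uIcc_of_le hs.2] at ht
      simp [max_eq_right ht.1]
    have h3 : ∫ t in s..r, (r - t) = (r - s) ^ 2 / 2 := by
      rw [intervalIntegral.integral_sub (by simp) (by simp)]
      simp only [intervalIntegral.integral_const, integral_id, smul_eq_mul]
      ring
    rw [h1, h2, h3]
    simp only [intervalIntegral.integral_const, smul_eq_mul]
    ring
  rw [setIntegral_congr_fun measurableSet_Ioc hin, ← integral_of_le hlr]
  have hd : ∀ s ∈ uIcc l r, HasDerivAt
      (fun s : ℝ => - (r - l) * (r - s) ^ 2 / 2 + (r - s) ^ 3 / 6)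
      ((r - s) * (s - l) + (r - s) ^ 2 / 2) s := by
    intro s _
    have h0 : HasDerivAt (fun s : ℝ => r - s) (-1) s := by
      simpa using (hasDerivAt_id s).const_sub r
    refine ((((h0.pow 2).const_mul (-(r-l))).div_const 2).add
      ((h0.pow 3).div_const 6)).congr_deriv ?_
    norm_num
    ring
  rw [integral_eq_sub_of_hasDerivAt hd (Continuous.intervalIntegrable (by fun_prop) _ _)]
  ring

/-- Mean-square error between the time average of a Brownian-covariance process
over `[a, a+τ]` and its right-endpoint Riemann sum on the fine mesh of step `h`
(with `τ = M h`): the error equals `h²/(3τ)`; in particular for `h = τ²` it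
equals `τ³/3` and hence is at most `τ³`. -/
theorem brownian_average_riemann_sum_error
    {Ω : Type*} [MeasurableSpace Ω] (ℙ : Measure Ω) [IsProbabilityMeasure ℙ]
    (W : ℝ → Ω → ℝ)
    (hmeas : Measurable fun p : ℝ × Ω => W p.1 p.2)
    (hsq : ∀ t : ℝ, 0 ≤ t → Integrable (fun ω => (W t ω) ^ 2) ℙ)
    (hmean : ∀ t : ℝ, 0 ≤ t → ∫ ω, W t ω ∂ℙ = 0)
    (hcov : ∀ s t : ℝ, 0 ≤ s → 0 ≤ t → ∫ ω, W s ω * W t ω ∂ℙ = min s t)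
    (a h τ : ℝ) (M : ℕ) (ha : 0 ≤ a) (hh : 0 < h) (hM : 0 < M)
    (hτ : τ = M * h) :
    (∫ ω, ((1 / τ) * (∫ s in a..(a + τ), W s ω)
        - (1 / (M : ℝ)) * ∑ ℓ ∈ Finset.range M, W (a + (ℓ + 1 : ℕ) * h) ω) ^ 2 ∂ℙ)
      = h ^ 2 / (3 * τ)
    ∧ (h = τ ^ 2 →
        (∫ ω, ((1 / τ) * (∫ s in a..(a + τ), W s ω)
            - (1 / (M : ℝ)) * ∑ ℓ ∈ Finset.range M, W (a + (ℓ + 1 : ℕ) * h) ω) ^ 2 ∂ℙ)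
          = τ ^ 3 / 3
        ∧ (∫ ω, ((1 / τ) * (∫ s in a..(a + τ), W s ω)
            - (1 / (M : ℝ)) * ∑ ℓ ∈ Finset.range M, W (a + (ℓ + 1 : ℕ) * h) ω) ^ 2 ∂ℙ)
          ≤ τ ^ 3) := by

  have hMp : (0 : ℝ) < M := by exact_mod_cast hM
  have hτp : 0 < τ := by rw [hτ]; positivity
  have hWm : ∀ s, Measurable (W s) := fun s => hmeas.comp measurable_prodMk_left
  have hWW : ∀ s t, 0 ≤ s → 0 ≤ t → Integrable (fun ω => W s ω * W t ω) ℙ := by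
    intro s t hs ht
    refine ((hsq s hs).add (hsq t ht)).mono' ((hWm s).mul (hWm t)).aestronglyMeasurable ?_
    refine Filter.Eventually.of_forall fun ω => ?_
    rw [Real.norm_eq_abs, abs_mul]
    simp only [Pi.add_apply]
    nlinarith [sq_nonneg (|W s ω| - |W t ω|), sq_abs (W s ω), sq_abs (W t ω),
      sq_nonneg (W s ω), sq_nonneg (W t ω)]
  have hinc : ∀ s r t q, 0 ≤ s → 0 ≤ r → 0 ≤ t → 0 ≤ q →
      ∫ ω, (W s ω - W r ω) * (W t ω - W q ω) ∂ℙ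
        = min s t - min s q - min r t + min r q := by
    intro s r t q hs hr ht hq
    have : ∀ ω, (W s ω - W r ω) * (W t ω - W q ω)
        = W s ω * W t ω - W s ω * W q ω - W r ω * W t ω + W r ω * W q ω := by
      intro ω; ring
    simp_rw [this]
    have i1 : Integrable (fun ω => W s ω * W t ω - W s ω * W q ω) ℙ :=
      (hWW s t hs ht).sub (hWW s q hs hq)
    have i2 : Integrable (fun ω => W s ω * W t ω - W s ω * W q ω - W r ω * W t ω) ℙ :=
      i1.sub (hWW r t hr ht)
    rw [integral_add i2 (hWW r q hr hq), integral_sub i1 (hWW r t hr ht),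
      integral_sub (hWW s t hs ht) (hWW s q hs hq), hcov _ _ hs ht, hcov _ _ hs hq,
      hcov _ _ hr ht, hcov _ _ hr hq]
  have hinci : ∀ s r, 0 ≤ s → 0 ≤ r → Integrable (fun ω => (W s ω - W r ω) ^ 2) ℙ := by
    intro s r hs hr
    have : ∀ ω, (W s ω - W r ω) ^ 2
        = W s ω * W s ω - W s ω * W r ω - W r ω * W s ω + W r ω * W r ω := by
      intro ω; ring
    simp_rw [this]
    exact (((hWW s s hs hs).sub (hWW s r hs hr)).sub (hWW r s hr hs)).add (hWW r r hr hr)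
  let x : ℕ → ℝ := fun i => a + i * h
  have hx0 : ∀ i, 0 ≤ x i := fun i => by simp only [x]; positivity
  have hxm : Monotone x := by
    intro i j hij
    have : (i : ℝ) ≤ j := by exact_mod_cast hij
    simp only [x]
    nlinarith
  have hxs : ∀ i, x (i + 1) - x i = h := by intro i; simp only [x]; push_cast; ring
  have hxM : x M = a + τ := by simp only [x]; rw [hτ]
  have hx00 : x 0 = a := by simp [x]
  let D : ℕ → Ω → ℝ := fun i ω => ∫ s in Ioc (x i) (x (i + 1)), (W s ω - W (x (i + 1)) ω)
  have hFub : ∀ i j, _ := fun i j => fubini_aux ℙ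
    (fun s ω => W s ω - W (x (i + 1)) ω) (fun s ω => W s ω - W (x (j + 1)) ω)
    (hmeas.sub ((hWm _).comp measurable_snd)) (hmeas.sub ((hWm _).comp measurable_snd))
    (Ioc (x i) (x (i + 1))) (Ioc (x j) (x (j + 1))) measurableSet_Ioc measurableSet_Ioc
    (by simp) (by simp) h
    (fun s hs => hinci _ _ ((hx0 i).trans hs.1.le) (hx0 _))
    (fun s hs => hinci _ _ ((hx0 j).trans hs.1.le) (hx0 _))
    (fun s hs => by
      simp_rw [pow_two]
      have h0 := (hx0 i).trans hs.1.le
      rw [hinc _ _ _ _ h0 (hx0 _) h0 (hx0 _), min_self, min_self, min_eq_left hs.2,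
        min_eq_right hs.2]
      linarith [hxs i, hs.1])
    (fun s hs => by
      simp_rw [pow_two]
      have h0 := (hx0 j).trans hs.1.le
      rw [hinc _ _ _ _ h0 (hx0 _) h0 (hx0 _), min_self, min_self, min_eq_left hs.2,
        min_eq_right hs.2]
      linarith [hxs j, hs.1])
  have hDi : ∀ i j, Integrable (fun ω => D i ω * D j ω) ℙ := fun i j => (hFub i j).1
  have hlt : ∀ i j, i < j → ∫ ω, D i ω * D j ω ∂ℙ = 0 := by
    intro i j hij
    refine (hFub i j).2.trans ?_
    rw [setIntegral_congr_fun (g := fun _ => (0 : ℝ)) (measurableSet_Ioc.prod measurableSet_Ioc)]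
    · simp
    · rintro ⟨s, t⟩ ⟨hs, ht⟩
      simp only at hs ht ⊢
      have hij' : x (i + 1) ≤ x j := hxm hij
      rw [hinc _ _ _ _ ((hx0 i).trans hs.1.le) (hx0 _) ((hx0 j).trans ht.1.le) (hx0 _)]
      have h1 := hs.2
      have h2 := ht.1
      have h3 := ht.2
      rw [min_eq_left (by linarith), min_eq_left (by linarith), min_eq_left (by linarith),
        min_eq_left (by linarith)]
      ring
  have hdiag : ∀ i, ∫ ω, D i ω * D i ω ∂ℙ = h ^ 3 / 3 := by
    intro i
    refine (hFub i i).2.trans ?_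
    rw [← hxs i, ← kernel_diag _ _ (hxm (Nat.le_succ i))]
    refine setIntegral_congr_fun (measurableSet_Ioc.prod measurableSet_Ioc) ?_
    rintro ⟨s, t⟩ ⟨hs, ht⟩
    simp only at hs ht ⊢
    rw [hinc _ _ _ _ ((hx0 i).trans hs.1.le) (hx0 _) ((hx0 i).trans ht.1.le) (hx0 _)]
    rw [min_eq_left hs.2, min_eq_right ht.2, min_self]
    linarith [min_add_max s t]
  have hDD : ∀ i j, ∫ ω, D i ω * D j ω ∂ℙ = if i = j then h ^ 3 / 3 else 0 := by
    intro i j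
    rcases lt_trichotomy i j with hij | hij | hij
    · rw [hlt i j hij, if_neg hij.ne]
    · subst hij; rw [hdiag, if_pos rfl]
    · simp_rw [mul_comm (D i _)]
      rw [hlt j i hij, if_neg hij.ne']
  have hpath : ∀ᵐ ω ∂ℙ, IntegrableOn (fun s => W s ω) (Ioc a (a + τ)) := by
    have : Integrable (fun p : ℝ × Ω => W p.1 p.2)
        ((volume.restrict (Ioc a (a + τ))).prod ℙ) := by
      have hb : ∀ s, 0 ≤ s → Integrable (W s) ℙ := by
        intro s hs
        refine ((integrable_const (1 : ℝ)).add (hsq s hs)).mono' (hWm s).aestronglyMeasurable ?_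
        refine Filter.Eventually.of_forall fun ω => ?_
        simp only [Pi.add_apply, Real.norm_eq_abs]
        nlinarith [sq_nonneg (|W s ω| - 1), sq_abs (W s ω), sq_nonneg (W s ω)]
      rw [integrable_prod_iff hmeas.aestronglyMeasurable]
      refine ⟨?_, ?_⟩
      · filter_upwards [ae_restrict_mem measurableSet_Ioc] with s hs
        exact hb s (ha.trans hs.1.le)
      · refine Integrable.mono' (integrable_const (1 + (a + τ)))
          (hmeas.norm.stronglyMeasurable.integral_prod_right').aestronglyMeasurable ?_
        filter_upwards [ae_restrict_mem measurableSet_Ioc] with s hs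
        have hs0 : 0 ≤ s := ha.trans hs.1.le
        rw [Real.norm_of_nonneg (integral_nonneg fun _ => norm_nonneg _)]
        calc _ ≤ ∫ ω, (1 + (W s ω) ^ 2) ∂ℙ := by
              refine integral_mono (hb s hs0).norm ((integrable_const _).add (hsq s hs0)) ?_
              intro ω
              simp only [Real.norm_eq_abs]
              nlinarith [sq_nonneg (|W s ω| - 1), sq_abs (W s ω), sq_nonneg (W s ω)]
          _ = 1 + s := by
              rw [integral_add (integrable_const _) (hsq s hs0)]
              simp_rw [pow_two]
              rw [hcov s s hs0 hs0]
              simp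
          _ ≤ _ := by linarith [hs.2]
    exact this.prod_left_ae
  have herr : ∀ᵐ ω ∂ℙ, ((1 / τ) * (∫ s in a..(a + τ), W s ω)
        - (1 / (M : ℝ)) * ∑ ℓ ∈ Finset.range M, W (a + (ℓ + 1 : ℕ) * h) ω) ^ 2
        = (1 / τ) ^ 2 * ∑ i ∈ Finset.range M, ∑ j ∈ Finset.range M, D i ω * D j ω := by
    filter_upwards [hpath] with ω hω
    have hii : ∀ i < M, IntervalIntegrable (fun s => W s ω) volume (x i) (x (i + 1)) := by
      intro i hi
      rw [intervalIntegrable_iff_integrableOn_Ioc_of_le (hxm (Nat.le_succ i))]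
      refine hω.mono_set (Ioc_subset_Ioc ?_ ?_)
      · rw [← hx00]; exact hxm (Nat.zero_le i)
      · rw [← hxM]; exact hxm hi
    have hD : ∀ i ∈ Finset.range M, D i ω
        = (∫ s in (x i)..(x (i + 1)), W s ω) - h * W (a + (i + 1 : ℕ) * h) ω := by
      intro i hi
      simp only [D]
      rw [← integral_of_le (hxm (Nat.le_succ i)),
        intervalIntegral.integral_sub (hii i (Finset.mem_range.1 hi)) (by simp),
        intervalIntegral.integral_const, hxs, smul_eq_mul]
    rw [← Finset.sum_mul_sum, Finset.sum_congr rfl hD, Finset.sum_sub_distrib,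
      sum_integral_adjacent_intervals hii, hx00, hxM, ← Finset.mul_sum, ← pow_two, ← mul_pow]
    congr 1
    rw [hτ]
    field_simp
  have key : (∫ ω, ((1 / τ) * (∫ s in a..(a + τ), W s ω)
        - (1 / (M : ℝ)) * ∑ ℓ ∈ Finset.range M, W (a + (ℓ + 1 : ℕ) * h) ω) ^ 2 ∂ℙ)
      = h ^ 2 / (3 * τ) := by
    rw [integral_congr_ae herr, MeasureTheory.integral_const_mul, MeasureTheory.integral_finsetSum]
    · have : ∀ i ∈ Finset.range M, ∫ ω, ∑ j ∈ Finset.range M, D i ω * D j ω ∂ℙ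
          = h ^ 3 / 3 := by
        intro i hi
        rw [MeasureTheory.integral_finsetSum _ fun j _ => hDi i j]
        simp_rw [hDD]
        rw [Finset.sum_ite_eq, if_pos hi]
      rw [Finset.sum_congr rfl this, Finset.sum_const, Finset.card_range, nsmul_eq_mul, hτ]
      field_simp
    · intro i _
      exact integrable_finsetSum _ fun j _ => hDi i j
  refine ⟨key, fun hτ2 => ?_⟩
  have key2 : h ^ 2 / (3 * τ) = τ ^ 3 / 3 := by
    rw [hτ2]; field_simp
  rw [key, key2]
  refine ⟨rfl, ?_⟩
  have : 0 < τ ^ 3 := by positivity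
  linarith
end

section
/- Let (Ω, 𝔉, ℙ) be a probability space, let E, G be real normed spaces, let B : E × E → G be a bilinear map with ‖B(u, v)‖ ≤ ‖u‖·‖v‖ for all u, v ∈ E, let τ > 0, C ≥ 0, and let Z : [0, τ] × Ω → E be a jointly strongly measurable process with 𝔼‖Z(t)‖⁴ < ∞ for each t and satisfying the fourth-moment increment bound 𝔼[ ‖Z(t) - Z(s)‖⁴ ] ≤ C²·|t - s|² for all s, t ∈ [0, τ]. Define F(t, s, r) := B(Z(t) - Z(s), Z(t) - Z(r)). Then there is an absolute constant K > 0 (for instance K = 12) such that for all (t, s, r), (t', s', r') ∈ [0, τ]³, 𝔼[ ‖F(t, s, r) - F(t', s', r')‖² ] ≤ K·C²·τ·( |t - t'| + |s - s'| + |r - r'| ). -/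
open MeasureTheory Set

universe u v w

/-- Cauchy-Schwarz for products of squares. -/
lemma sq_mul_sq_bound {Ω : Type u} [MeasurableSpace Ω] (μ : Measure Ω)
    (x y : Ω → ℝ) (hx : AEStronglyMeasurable x μ) (hy : AEStronglyMeasurable y μ)
    (ix : Integrable (fun ω => x ω ^ 4) μ) (iy : Integrable (fun ω => y ω ^ 4) μ)
    (a b : ℝ) (ha : 0 ≤ a) (hb : 0 ≤ b)
    (hxa : ∫ ω, x ω ^ 4 ∂μ ≤ a ^ 2) (hyb : ∫ ω, y ω ^ 4 ∂μ ≤ b ^ 2) :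
    Integrable (fun ω => x ω ^ 2 * y ω ^ 2) μ ∧ ∫ ω, x ω ^ 2 * y ω ^ 2 ∂μ ≤ a * b := by
  have hi : Integrable (fun ω => x ω ^ 2 * y ω ^ 2) μ := by
    refine (ix.add iy).mono' ((hx.pow 2).mul (hy.pow 2)) (Filter.Eventually.of_forall fun ω => ?_)
    rw [Real.norm_of_nonneg (by positivity)]
    simp only [Pi.add_apply]
    nlinarith [sq_nonneg (x ω ^ 2 - y ω ^ 2), sq_nonneg (x ω ^ 2), sq_nonneg (y ω ^ 2)]
  refine ⟨hi, ?_⟩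
  have hA : 0 ≤ ∫ ω, x ω ^ 4 ∂μ := integral_nonneg fun ω => by positivity
  have hB : 0 ≤ ∫ ω, y ω ^ 4 ∂μ := integral_nonneg fun ω => by positivity
  have key : ∀ k : ℝ, 0 ≤ (∫ ω, x ω ^ 4 ∂μ) * (k * k)
      + (2 * ∫ ω, x ω ^ 2 * y ω ^ 2 ∂μ) * k + ∫ ω, y ω ^ 4 ∂μ := by
    intro k
    have h0 : 0 ≤ ∫ ω, ((k * k) * x ω ^ 4 + (2 * k) * (x ω ^ 2 * y ω ^ 2)) + y ω ^ 4 ∂μ := by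
      refine integral_nonneg fun ω => ?_
      have : (0 : ℝ) ≤ (k * x ω ^ 2 + y ω ^ 2) ^ 2 := sq_nonneg _
      simp only [Pi.zero_apply]
      nlinarith
    have i12 : Integrable (fun ω => (k * k) * x ω ^ 4 + (2 * k) * (x ω ^ 2 * y ω ^ 2)) μ :=
      (ix.const_mul _).add (hi.const_mul _)
    rw [integral_add i12 iy,
      integral_add (ix.const_mul _) (hi.const_mul _), integral_const_mul, integral_const_mul] at h0
    linarith
  have hd := discrim_le_zero key
  unfold discrim at hd
  have hm := mul_le_mul hxa hyb hB (sq_nonneg a)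
  refine abs_le_of_sq_le_sq' ?_ (mul_nonneg ha hb) |>.2
  nlinarith

/-- Mean-square modulus of continuity of the triple-integrand
`F(t,s,r) = B(Z(t)-Z(s), Z(t)-Z(r))`: there is an absolute constant `K > 0`
such that for any process `Z` with fourth-moment increment bound
`𝔼‖Z(t)-Z(s)‖⁴ ≤ C²|t-s|²` on `[0,τ]`,
`𝔼‖F(t,s,r) - F(t',s',r')‖² ≤ K C² τ (|t-t'| + |s-s'| + |r-r'|)`. -/
theorem triple_integrand_mean_square_modulus :
    ∃ K : ℝ, 0 < K ∧
      ∀ (Ω : Type u) [MeasurableSpace Ω] (ℙ : Measure Ω) [IsProbabilityMeasure ℙ]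
        (E : Type v) (G : Type w)
        [NormedAddCommGroup E] [NormedSpace ℝ E]
        [NormedAddCommGroup G] [NormedSpace ℝ G]
        (B : E →ₗ[ℝ] E →ₗ[ℝ] G), (∀ u v, ‖B u v‖ ≤ ‖u‖ * ‖v‖) →
      ∀ (τ C : ℝ), 0 < τ → 0 ≤ C →
      ∀ (Z : ℝ → Ω → E),
        StronglyMeasurable (fun p : ℝ × Ω => Z p.1 p.2) →
        (∀ t ∈ Icc (0 : ℝ) τ, Integrable (fun ω => ‖Z t ω‖ ^ 4) ℙ) →
        (∀ s ∈ Icc (0 : ℝ) τ, ∀ t ∈ Icc (0 : ℝ) τ,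
          ∫ ω, ‖Z t ω - Z s ω‖ ^ 4 ∂ℙ ≤ C ^ 2 * |t - s| ^ 2) →
      ∀ t s r t' s' r' : ℝ, t ∈ Icc (0 : ℝ) τ → s ∈ Icc (0 : ℝ) τ →
        r ∈ Icc (0 : ℝ) τ → t' ∈ Icc (0 : ℝ) τ → s' ∈ Icc (0 : ℝ) τ →
        r' ∈ Icc (0 : ℝ) τ →
        ∫ ω, ‖B (Z t ω - Z s ω) (Z t ω - Z r ω)
              - B (Z t' ω - Z s' ω) (Z t' ω - Z r' ω)‖ ^ 2 ∂ℙ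
          ≤ K * C ^ 2 * τ * (|t - t'| + |s - s'| + |r - r'|) := by
  refine ⟨8, by norm_num, ?_⟩
  intro Ω _ ℙ _ E G _ _ _ _ B hB τ C hτ hC Z hZ hint hinc t s r t' s' r' ht hs hr ht' hs' hr'
  have hm : ∀ t, StronglyMeasurable (Z t) := fun t => hZ.comp_measurable measurable_prodMk_left
  have hn : ∀ a b, AEStronglyMeasurable (fun ω => ‖Z a ω - Z b ω‖) ℙ := fun a b =>
    ((hm a).sub (hm b)).norm.aestronglyMeasurable
  have hi : ∀ a ∈ Icc (0 : ℝ) τ, ∀ b ∈ Icc (0 : ℝ) τ,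
      Integrable (fun ω => ‖Z a ω - Z b ω‖ ^ 4) ℙ := by
    intro a ha b hb
    refine (((hint a ha).add (hint b hb)).const_mul 8).mono' ((hn a b).pow 4)
      (Filter.Eventually.of_forall fun ω => ?_)
    rw [Real.norm_of_nonneg (by positivity)]
    simp only [Pi.add_apply]
    have h1 : ‖Z a ω - Z b ω‖ ^ 4 ≤ (‖Z a ω‖ + ‖Z b ω‖) ^ 4 := by
      gcongr
      exact norm_sub_le _ _
    have h2 := add_pow_le (norm_nonneg (Z a ω)) (norm_nonneg (Z b ω)) 4
    norm_num at h2
    linarith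
  have cs : ∀ a ∈ Icc (0 : ℝ) τ, ∀ b ∈ Icc (0 : ℝ) τ, ∀ c ∈ Icc (0 : ℝ) τ,
      ∀ d ∈ Icc (0 : ℝ) τ,
      Integrable (fun ω => ‖Z a ω - Z b ω‖ ^ 2 * ‖Z c ω - Z d ω‖ ^ 2) ℙ ∧
      ∫ ω, ‖Z a ω - Z b ω‖ ^ 2 * ‖Z c ω - Z d ω‖ ^ 2 ∂ℙ ≤ (C * |a - b|) * (C * τ) := by
    intro a ha b hb c hc d hd
    refine sq_mul_sq_bound ℙ _ _ (hn a b) (hn c d) (hi a ha b hb) (hi c hc d hd) _ _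
      (by positivity) (by positivity) ?_ ?_
    · rw [mul_pow]
      exact hinc b hb a ha
    · rw [mul_pow]
      refine (hinc d hd c hc).trans ?_
      have : |c - d| ≤ τ := by
        rw [abs_le]
        constructor <;> linarith [hc.1, hc.2, hd.1, hd.2]
      gcongr
  obtain ⟨i1, b1⟩ := cs t ht t' ht' t ht r hr
  obtain ⟨i2, b2⟩ := cs s hs s' hs' t ht r hr
  obtain ⟨i3, b3⟩ := cs t ht t' ht' t' ht' s' hs'
  obtain ⟨i4, b4⟩ := cs r hr r' hr' t' ht' s' hs'
  have hle := integral_mono_of_nonneg (μ := ℙ)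
    (f := fun ω => ‖B (Z t ω - Z s ω) (Z t ω - Z r ω)
              - B (Z t' ω - Z s' ω) (Z t' ω - Z r' ω)‖ ^ 2)
    (Filter.Eventually.of_forall fun ω => by positivity)
    ((((i1.add i2).add i3).add i4).const_mul 4)
    (Filter.Eventually.of_forall fun ω => by
      simp only [Pi.add_apply]
      have e : B (Z t ω - Z s ω) (Z t ω - Z r ω) - B (Z t' ω - Z s' ω) (Z t' ω - Z r' ω)
          = B ((Z t ω - Z t' ω) - (Z s ω - Z s' ω)) (Z t ω - Z r ω)
            + B (Z t' ω - Z s' ω) ((Z t ω - Z t' ω) - (Z r ω - Z r' ω)) := by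
        simp only [map_sub, LinearMap.sub_apply]
        abel
      have h : ‖B (Z t ω - Z s ω) (Z t ω - Z r ω) - B (Z t' ω - Z s' ω) (Z t' ω - Z r' ω)‖
          ≤ (‖Z t ω - Z t' ω‖ + ‖Z s ω - Z s' ω‖) * ‖Z t ω - Z r ω‖
            + ‖Z t' ω - Z s' ω‖ * (‖Z t ω - Z t' ω‖ + ‖Z r ω - Z r' ω‖) := by
        rw [e]
        refine (norm_add_le _ _).trans (add_le_add ((hB _ _).trans ?_) ((hB _ _).trans ?_))
        · gcongr
          exact norm_sub_le _ _
        · gcongr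
          exact norm_sub_le _ _
      refine (pow_le_pow_left₀ (norm_nonneg _) h 2).trans ?_
      generalize ‖Z t ω - Z t' ω‖ = p
      generalize ‖Z s ω - Z s' ω‖ = q
      generalize ‖Z r ω - Z r' ω‖ = m
      generalize ‖Z t ω - Z r ω‖ = b
      generalize ‖Z t' ω - Z s' ω‖ = a
      nlinarith [sq_nonneg (p * b - q * b), sq_nonneg (p * b - p * a), sq_nonneg (p * b - m * a),
        sq_nonneg (q * b - p * a), sq_nonneg (q * b - m * a), sq_nonneg (p * a - m * a)])
  refine hle.trans ?_
  rw [integral_const_mul, integral_add' ((i1.add i2).add i3) i4, integral_add' (i1.add i2) i3,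
    integral_add' i1 i2]
  have : 0 ≤ C ^ 2 * τ * |s - s'| := by positivity
  have : 0 ≤ C ^ 2 * τ * |r - r'| := by positivity
  nlinarith
end

section
/- Let (Ω, 𝔉, ℙ) be a probability space, G a real Banach space, A ≥ 0, h > 0, and let F : [0, ∞)³ × Ω → G be a jointly strongly measurable map, square-integrable in ω for each (t,s,r), satisfying 𝔼[ ‖F(t, s, r) - F(t', s', r')‖² ] ≤ A·( |t - t'| + |s - s'| + |r - r'| ) for all arguments in a cube R = [t₁ - h, t₁] × [t₂ - h, t₂] × [t₃ - h, t₃]. Then the local quadrature error on R against the corner value satisfies 𝔼[ ‖ ∫_R ( F(t, s, r) - F(t₁, t₂, t₃) ) ds dt dr ‖² ] ≤ 3·A·h⁷. -/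
open MeasureTheory Set intervalIntegral

theorem microbox_sq_lintegral_le {α : Type*} [MeasurableSpace α] (μ : Measure α)
    (f : α → ENNReal) (hf : AEMeasurable f μ) :
    (∫⁻ a, f a ∂μ) ^ 2 ≤ μ univ * ∫⁻ a, f a ^ 2 ∂μ := by
  have H := ENNReal.lintegral_mul_le_Lp_mul_Lq μ Real.HolderConjugate.two_two
    (f := fun _ => 1) (g := f) aemeasurable_const hf
  simp only [Pi.mul_apply, one_mul, ENNReal.one_rpow, lintegral_const] at H
  calc (∫⁻ a, f a ∂μ) ^ 2
      ≤ (μ univ ^ (1 / 2 : ℝ) * (∫⁻ a, f a ^ (2 : ℝ) ∂μ) ^ (1 / 2 : ℝ)) ^ 2 := by gcongr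
    _ = μ univ * ∫⁻ a, f a ^ 2 ∂μ := by
      rw [mul_pow, ← ENNReal.rpow_natCast, ← ENNReal.rpow_natCast, ← ENNReal.rpow_mul,
        ← ENNReal.rpow_mul]
      norm_num

/-- Local quadrature error on a micro-box against the corner value: if
`𝔼‖F(t,s,r) - F(t',s',r')‖² ≤ A (|t-t'| + |s-s'| + |r-r'|)` on the cube
`R = [t₁-h,t₁] × [t₂-h,t₂] × [t₃-h,t₃]`, then
`𝔼‖∫_R (F(t,s,r) - F(t₁,t₂,t₃)) ds dt dr‖² ≤ 3 A h⁷`. -/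
theorem microbox_quadrature_error
    {Ω : Type*} [MeasurableSpace Ω] (ℙ : Measure Ω) [IsProbabilityMeasure ℙ]
    {G : Type*} [NormedAddCommGroup G] [NormedSpace ℝ G] [CompleteSpace G]
    (A h t₁ t₂ t₃ : ℝ) (hA : 0 ≤ A) (hh : 0 < h)
    (F : ℝ → ℝ → ℝ → Ω → G)
    (hmeas : StronglyMeasurable fun p : ℝ × ℝ × ℝ × Ω => F p.1 p.2.1 p.2.2.1 p.2.2.2)
    (hsq : ∀ t ∈ Icc (t₁ - h) t₁, ∀ s ∈ Icc (t₂ - h) t₂, ∀ r ∈ Icc (t₃ - h) t₃,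
      Integrable (fun ω => ‖F t s r ω‖ ^ 2) ℙ)
    (hmod : ∀ t ∈ Icc (t₁ - h) t₁, ∀ s ∈ Icc (t₂ - h) t₂, ∀ r ∈ Icc (t₃ - h) t₃,
      ∀ t' ∈ Icc (t₁ - h) t₁, ∀ s' ∈ Icc (t₂ - h) t₂, ∀ r' ∈ Icc (t₃ - h) t₃,
      ∫ ω, ‖F t s r ω - F t' s' r' ω‖ ^ 2 ∂ℙ
        ≤ A * (|t - t'| + |s - s'| + |r - r'|)) :
    ∫ ω, ‖∫ t in (t₁ - h)..t₁, ∫ s in (t₂ - h)..t₂, ∫ r in (t₃ - h)..t₃,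
        (F t s r ω - F t₁ t₂ t₃ ω)‖ ^ 2 ∂ℙ
      ≤ 3 * A * h ^ 7 := by
  have hcorner : StronglyMeasurable fun ω => F t₁ t₂ t₃ ω :=
    hmeas.comp_measurable (g := fun ω : Ω => (t₁, t₂, t₃, ω)) (by fun_prop)
  have hD : StronglyMeasurable fun q : Ω × (ℝ × ℝ × ℝ) =>
      F q.2.1 q.2.2.1 q.2.2.2 q.1 - F t₁ t₂ t₃ q.1 :=
    (hmeas.comp_measurable (g := fun q : Ω × (ℝ × ℝ × ℝ) => (q.2.1, q.2.2.1, q.2.2.2, q.1))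
      (by fun_prop)).sub (hcorner.comp_measurable measurable_fst)
  set μ₁ : Measure ℝ := volume.restrict (Ioc (t₁ - h) t₁) with hμ₁
  set μ₂ : Measure ℝ := volume.restrict (Ioc (t₂ - h) t₂) with hμ₂
  set μ₃ : Measure ℝ := volume.restrict (Ioc (t₃ - h) t₃) with hμ₃
  have hDω (ω : Ω) : Measurable fun p : ℝ × ℝ × ℝ => ‖F p.1 p.2.1 p.2.2 ω - F t₁ t₂ t₃ ω‖ₑ :=
    (hD.comp_measurable (g := fun p : ℝ × ℝ × ℝ => (ω, p)) (by fun_prop)).enorm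
  have huniv : (μ₁.prod (μ₂.prod μ₃)) univ = ENNReal.ofReal h ^ 3 := by
    rw [← univ_prod_univ, Measure.prod_prod, ← univ_prod_univ, Measure.prod_prod]
    simp [hμ₁, hμ₂, hμ₃]
    ring
  have hpt (ω : Ω) : ‖∫ t in (t₁ - h)..t₁, ∫ s in (t₂ - h)..t₂, ∫ r in (t₃ - h)..t₃,
        (F t s r ω - F t₁ t₂ t₃ ω)‖ₑ ^ 2 ≤ ENNReal.ofReal h ^ 3 *
        ∫⁻ p, ‖F p.1 p.2.1 p.2.2 ω - F t₁ t₂ t₃ ω‖ₑ ^ 2 ∂(μ₁.prod (μ₂.prod μ₃)) := by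
    rw [← huniv]
    refine le_trans ?_ (microbox_sq_lintegral_le _ _ (hDω ω).aemeasurable)
    gcongr
    rw [lintegral_prod _ (hDω ω).aemeasurable]
    rw [integral_of_le (by linarith)]
    refine (enorm_integral_le_lintegral_enorm _).trans ?_
    refine lintegral_mono fun t => ?_
    have hDt : Measurable fun q : ℝ × ℝ => ‖F t q.1 q.2 ω - F t₁ t₂ t₃ ω‖ₑ :=
      (hDω ω).comp (by fun_prop : Measurable fun q : ℝ × ℝ => (t, q))
    simp only
    rw [lintegral_prod _ hDt.aemeasurable]
    rw [integral_of_le (by linarith)]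
    refine (enorm_integral_le_lintegral_enorm _).trans ?_
    refine lintegral_mono fun s => ?_
    rw [integral_of_le (by linarith)]
    exact enorm_integral_le_lintegral_enorm _
  have hin : ∀ t ∈ Icc (t₁ - h) t₁, ∀ s ∈ Icc (t₂ - h) t₂, ∀ r ∈ Icc (t₃ - h) t₃,
      ∫⁻ ω, ‖F t s r ω - F t₁ t₂ t₃ ω‖ₑ ^ 2 ∂ℙ ≤ ENNReal.ofReal (3 * A * h) := by
    intro t ht s hs r hr
    have c1 : t₁ ∈ Icc (t₁ - h) t₁ := ⟨by linarith, le_rfl⟩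
    have c2 : t₂ ∈ Icc (t₂ - h) t₂ := ⟨by linarith, le_rfl⟩
    have c3 : t₃ ∈ Icc (t₃ - h) t₃ := ⟨by linarith, le_rfl⟩
    have hm : StronglyMeasurable fun ω => F t s r ω :=
      hmeas.comp_measurable (g := fun ω : Ω => (t, s, r, ω)) (by fun_prop)
    have m1 : MemLp (fun ω => F t s r ω) 2 ℙ :=
      (memLp_two_iff_integrable_sq_norm hm.aestronglyMeasurable).2 (hsq t ht s hs r hr)
    have m2 : MemLp (fun ω => F t₁ t₂ t₃ ω) 2 ℙ :=
      (memLp_two_iff_integrable_sq_norm hcorner.aestronglyMeasurable).2 (hsq _ c1 _ c2 _ c3)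
    have hi : Integrable (fun ω => ‖F t s r ω - F t₁ t₂ t₃ ω‖ ^ 2) ℙ :=
      (memLp_two_iff_integrable_sq_norm (hm.sub hcorner).aestronglyMeasurable).1 (m1.sub m2)
    have e := ofReal_integral_norm_eq_lintegral_enorm hi
    simp only [norm_pow, norm_norm, enorm_pow, enorm_norm] at e
    rw [← e]
    apply ENNReal.ofReal_le_ofReal
    refine (hmod t ht s hs r hr _ c1 _ c2 _ c3).trans ?_
    have a1 : |t - t₁| ≤ h := abs_le.2 ⟨by linarith [ht.1], by linarith [ht.2]⟩
    have a2 : |s - t₂| ≤ h := abs_le.2 ⟨by linarith [hs.1], by linarith [hs.2]⟩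
    have a3 : |r - t₃| ≤ h := abs_le.2 ⟨by linarith [hr.1], by linarith [hr.2]⟩
    calc A * (|t - t₁| + |s - t₂| + |r - t₃|) ≤ A * (h + h + h) := by gcongr
      _ = 3 * A * h := by ring
  have hae : ∀ᵐ p ∂(μ₁.prod (μ₂.prod μ₃)),
      ∫⁻ ω, ‖F p.1 p.2.1 p.2.2 ω - F t₁ t₂ t₃ ω‖ₑ ^ 2 ∂ℙ ≤ ENNReal.ofReal (3 * A * h) := by
    rw [hμ₁, hμ₂, hμ₃, Measure.prod_restrict, Measure.prod_restrict]
    refine (ae_restrict_iff' (measurableSet_Ioc.prod (measurableSet_Ioc.prod measurableSet_Ioc))).2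
      (Filter.Eventually.of_forall ?_)
    rintro ⟨t, s, r⟩ ⟨ht, hs, hr⟩
    exact hin t (Ioc_subset_Icc_self ht) s (Ioc_subset_Icc_self hs) r (Ioc_subset_Icc_self hr)
  have htot : ∫⁻ ω, ‖∫ t in (t₁ - h)..t₁, ∫ s in (t₂ - h)..t₂, ∫ r in (t₃ - h)..t₃,
        (F t s r ω - F t₁ t₂ t₃ ω)‖ₑ ^ 2 ∂ℙ ≤ ENNReal.ofReal (3 * A * h ^ 7) := by
    refine (lintegral_mono hpt).trans ?_
    rw [lintegral_const_mul' _ _ (by finiteness)]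
    rw [lintegral_lintegral_swap (hD.enorm.pow_const 2).aemeasurable]
    calc _ ≤ ENNReal.ofReal h ^ 3 * ∫⁻ _, ENNReal.ofReal (3 * A * h) ∂(μ₁.prod (μ₂.prod μ₃)) := by
          gcongr 1
          exact lintegral_mono_ae hae
      _ = ENNReal.ofReal (3 * A * h ^ 7) := by
          rw [lintegral_const, huniv, ← ENNReal.ofReal_pow hh.le,
            ← ENNReal.ofReal_mul (by positivity), ← ENNReal.ofReal_mul (by positivity)]
          congr 1
          ring
  refine (Real.le_norm_self _).trans ?_
  have := (enorm_integral_le_lintegral_enorm (μ := ℙ) (fun ω =>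
    ‖∫ t in (t₁ - h)..t₁, ∫ s in (t₂ - h)..t₂, ∫ r in (t₃ - h)..t₃,
        (F t s r ω - F t₁ t₂ t₃ ω)‖ ^ 2))
  simp only [enorm_pow, enorm_norm] at this
  have h2 := this.trans htot
  rw [← ofReal_norm] at h2
  exact (ENNReal.ofReal_le_ofReal_iff (by positivity)).1 h2
end

section
/- Let (Ω, 𝔉, ℙ) be a probability space, let E, G be real Banach spaces, let B : E × E → G be a bilinear map with ‖B(u, v)‖ ≤ ‖u‖·‖v‖, let M be a positive integer, τ := 1/M, h := τ², and let Z : [0, τ] × Ω → E be a jointly strongly measurable process with Z square-integrable in the fourth moment (sup_t 𝔼‖Z(t)‖⁴ < ∞) and satisfying 𝔼[ ‖Z(t) - Z(s)‖⁴ ] ≤ C²·|t - s|² for all s, t ∈ [0, τ], for some C ≥ 0. Define F(t, s, r) := B(Z(t) - Z(s), Z(t) - Z(r)), the triple Bochner integral 𝐁 := ∫_0^τ ∫_0^τ ∫_0^τ F(t, s, r) ds dt dr, and the triple Riemann sum 𝐁^disc := h³ · Σ_{ℓ=1}^{M} Σ_{k=1}^{M} Σ_{j=1}^{M} F(ℓh,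 kh, jh). Then there is a constant K > 0, depending only on C (not on τ, M, Z, B), such that 𝔼[ ‖𝐁 - 𝐁^disc‖² ] ≤ K·τ⁹. Equivalently, 𝔼[ ‖τ^{-3}𝐁 - τ^{-3}𝐁^disc‖² ] ≤ K·τ³. -/
open MeasureTheory Set intervalIntegral Finset

/-- Step function integral equals Riemann sum. -/
lemma aux_step {G : Type*} [NormedAddCommGroup G] [NormedSpace ℝ G] [CompleteSpace G]
    (g : ℝ → G) (h : ℝ) (hh : 0 < h) (M : ℕ) :
    ∫ t in (0 : ℝ)..(M * h), g ((⌈t / h⌉₊ : ℝ) * h) = h • ∑ k ∈ Finset.Icc 1 M, g (k * h) := by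
  have hcongr : ∀ k : ℕ, ∀ t ∈ Ioc ((k : ℝ) * h) (((k + 1 : ℕ) : ℝ) * h),
      g ((⌈t / h⌉₊ : ℝ) * h) = g (((k + 1 : ℕ) : ℝ) * h) := by
    intro k t ht
    have : ⌈t / h⌉₊ = k + 1 := by
      rw [Nat.ceil_eq_iff (by omega)]
      constructor
      · rw [lt_div_iff₀ hh]; simpa using ht.1
      · rw [div_le_iff₀ hh]; exact ht.2
    rw [this]
  have hle : ∀ k : ℕ, (k : ℝ) * h ≤ ((k + 1 : ℕ) : ℝ) * h := by
    intro k
    push_cast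
    nlinarith
  have hint : ∀ k : ℕ, IntervalIntegrable (fun t => g ((⌈t / h⌉₊ : ℝ) * h)) volume
      ((k : ℝ) * h) (((k + 1 : ℕ) : ℝ) * h) := by
    intro k
    have hc : IntervalIntegrable (fun _ : ℝ => g (((k + 1 : ℕ) : ℝ) * h)) volume
      ((k : ℝ) * h) (((k + 1 : ℕ) : ℝ) * h) := intervalIntegrable_const
    refine hc.congr ?_
    intro t ht
    rw [uIoc_of_le (hle k)] at ht
    exact (hcongr k t ht).symm
  have hval : ∀ k : ℕ, ∫ t in ((k : ℝ) * h)..(((k + 1 : ℕ) : ℝ) * h), g ((⌈t / h⌉₊ : ℝ) * h)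
      = h • g (((k + 1 : ℕ) : ℝ) * h) := by
    intro k
    rw [integral_of_le (hle k), setIntegral_congr_fun measurableSet_Ioc (hcongr k),
      ← integral_of_le (hle k), intervalIntegral.integral_const]
    congr 1
    push_cast
    ring
  have := intervalIntegral.sum_integral_adjacent_intervals (μ := volume)
    (f := fun t => g ((⌈t / h⌉₊ : ℝ) * h)) (a := fun k : ℕ => (k : ℝ) * h) (n := M)
    (fun k _ => hint k)
  simp only [Nat.cast_zero, zero_mul] at this
  rw [← this, Finset.sum_congr rfl (fun k _ => hval k), ← Finset.smul_sum]
  congr 1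
  rw [Finset.range_eq_Ico, Finset.sum_Ico_add' (fun k : ℕ => g ((k : ℝ) * h)) 0 M 1]
  rfl

/-- Second moment bounds for parameter integrals. -/
lemma aux_moment {A Ω G : Type*} [MeasurableSpace A] [MeasurableSpace Ω]
    [NormedAddCommGroup G] [NormedSpace ℝ G]
    (ν : Measure A) [IsFiniteMeasure ν] (ℙ : Measure Ω) [IsProbabilityMeasure ℙ]
    (f : A × Ω → G) (hf : StronglyMeasurable f) (c : ENNReal) (hc : c ≠ ⊤)
    (hb : ∀ᵐ a ∂ν, ∫⁻ ω, ‖f (a, ω)‖ₑ ^ 2 ∂ℙ ≤ c) :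
    (∀ᵐ ω ∂ℙ, Integrable (fun a => f (a, ω)) ν) ∧
    ∫⁻ ω, ‖∫ a, f (a, ω) ∂ν‖ₑ ^ 2 ∂ℙ ≤ ν univ ^ 2 * c := by
  have hm : Measurable (fun p : A × Ω => ‖f p‖ₑ ^ 2) := hf.enorm.pow_const 2
  have hswap : ∫⁻ ω, ∫⁻ a, ‖f (a, ω)‖ₑ ^ 2 ∂ν ∂ℙ ≤ ν univ * c := by
    rw [lintegral_lintegral_swap]
    · calc ∫⁻ a, ∫⁻ ω, ‖f (a, ω)‖ₑ ^ 2 ∂ℙ ∂ν ≤ ∫⁻ a, c ∂ν := lintegral_mono_ae hb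
        _ = ν univ * c := by rw [lintegral_const, mul_comm]
    · exact (hm.comp measurable_swap).aemeasurable
  have hsec : ∀ ω, StronglyMeasurable (fun a => f (a, ω)) := fun ω =>
    hf.comp_measurable measurable_prodMk_right
  have hCS : ∀ ω, (∫⁻ a, ‖f (a, ω)‖ₑ ∂ν) ^ 2 ≤ ν univ * ∫⁻ a, ‖f (a, ω)‖ₑ ^ 2 ∂ν := by
    intro ω
    have h1 := ENNReal.lintegral_mul_le_Lp_mul_Lq ν Real.HolderConjugate.two_two
      (f := fun _ => 1) (g := fun a => ‖f (a, ω)‖ₑ) aemeasurable_const (hsec ω).enorm.aemeasurable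
    simp only [Pi.mul_apply, one_mul, one_pow, lintegral_const, ENNReal.rpow_ofNat] at h1
    calc (∫⁻ a, ‖f (a, ω)‖ₑ ∂ν) ^ 2 ≤
          (ν univ ^ (1 / 2 : ℝ) * (∫⁻ a, ‖f (a, ω)‖ₑ ^ 2 ∂ν) ^ (1 / 2 : ℝ)) ^ 2 := by gcongr
      _ = ν univ * ∫⁻ a, ‖f (a, ω)‖ₑ ^ 2 ∂ν := by
        rw [mul_pow, ← ENNReal.rpow_mul_natCast, ← ENNReal.rpow_mul_natCast]
        norm_num
  constructor
  · have hm2 : Measurable (fun ω => ∫⁻ a, ‖f (a, ω)‖ₑ ^ 2 ∂ν) := hm.lintegral_prod_left'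
    have hfin := ae_lt_top hm2
      (ne_top_of_le_ne_top (ENNReal.mul_ne_top (measure_ne_top _ _) hc) hswap)
    filter_upwards [hfin] with ω hω
    refine ⟨(hsec ω).aestronglyMeasurable, ?_⟩
    have h2 : (∫⁻ a, ‖f (a, ω)‖ₑ ∂ν) ^ 2 < ⊤ :=
      lt_of_le_of_lt (hCS ω) (ENNReal.mul_lt_top (measure_lt_top _ _) hω)
    by_contra hcon
    simp only [HasFiniteIntegral, not_lt, top_le_iff] at hcon
    rw [hcon] at h2
    simp at h2
  · calc ∫⁻ ω, ‖∫ a, f (a, ω) ∂ν‖ₑ ^ 2 ∂ℙ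
        ≤ ∫⁻ ω, ν univ * ∫⁻ a, ‖f (a, ω)‖ₑ ^ 2 ∂ν ∂ℙ := by
          refine lintegral_mono fun ω => ?_
          refine le_trans ?_ (hCS ω)
          gcongr
          exact enorm_integral_le_lintegral_enorm _
      _ = ν univ * ∫⁻ ω, ∫⁻ a, ‖f (a, ω)‖ₑ ^ 2 ∂ν ∂ℙ :=
          lintegral_const_mul' _ _ (measure_ne_top _ _)
      _ ≤ ν univ * (ν univ * c) := by gcongr
      _ = ν univ ^ 2 * c := by ring

lemma aux_pow4 (a b p : ℝ) (ha : 0 ≤ a) (hb : 0 ≤ b) (hp : 0 ≤ p) (h : p ≤ a + b) :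
    p ^ 4 ≤ 8 * a ^ 4 + 8 * b ^ 4 := by
  have h1 : p ^ 4 ≤ (a + b) ^ 4 := by gcongr
  have h2 : (a + b) ^ 2 ≤ 2 * (a ^ 2 + b ^ 2) := by nlinarith [sq_nonneg (a - b)]
  have h3 : ((a + b) ^ 2) ^ 2 ≤ (2 * (a ^ 2 + b ^ 2)) ^ 2 := by gcongr
  nlinarith [sq_nonneg (a ^ 2 - b ^ 2)]

lemma aux_amgm (x p q p' q' τ : ℝ) (hτ : 0 < τ) (hx : 0 ≤ x) (h : x ≤ p * q + q' * p') :
    x ^ 2 ≤ (p ^ 4 + p' ^ 4) / τ + τ * (q ^ 4 + q' ^ 4) := by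
  have h1 : x ^ 2 ≤ (p * q + q' * p') ^ 2 := by gcongr
  have key : ∀ u v : ℝ, 2 * (u * v) ^ 2 ≤ u ^ 4 / τ + τ * v ^ 4 := by
    intro u v
    have : u ^ 4 / τ + τ * v ^ 4 - 2 * (u * v) ^ 2 = (u ^ 2 - τ * v ^ 2) ^ 2 / τ := by
      field_simp
      ring
    have h0 : 0 ≤ (u ^ 2 - τ * v ^ 2) ^ 2 / τ := by positivity
    linarith
  have k1 := key p q
  have k2 := key p' q'
  have e : (p ^ 4 + p' ^ 4) / τ = p ^ 4 / τ + p' ^ 4 / τ := by ring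
  rw [e]
  nlinarith [sq_nonneg (p * q - q' * p')]

lemma aux_B {E G : Type*} [NormedAddCommGroup E] [NormedSpace ℝ E]
    [NormedAddCommGroup G] [NormedSpace ℝ G]
    (B : E →ₗ[ℝ] E →ₗ[ℝ] G) (hB : ∀ u v, ‖B u v‖ ≤ ‖u‖ * ‖v‖)
    (τ : ℝ) (hτ : 0 < τ) (a b c a' b' c' : E) :
    ‖B (a - b) (a - c) - B (a' - b') (a' - c')‖ ^ 2 ≤
      (16 * ‖a' - a‖ ^ 4 + 8 * ‖b' - b‖ ^ 4 + 8 * ‖c' - c‖ ^ 4) / τ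
        + τ * (‖a - c‖ ^ 4 + ‖a' - b'‖ ^ 4) := by
  have hsplit : B (a - b) (a - c) - B (a' - b') (a' - c')
      = B ((a - b) - (a' - b')) (a - c) + B (a' - b') ((a - c) - (a' - c')) := by
    simp only [map_sub, LinearMap.sub_apply]
    abel
  have h1 : ‖B (a - b) (a - c) - B (a' - b') (a' - c')‖ ≤
      ‖(a - b) - (a' - b')‖ * ‖a - c‖ + ‖a' - b'‖ * ‖(a - c) - (a' - c')‖ := by
    rw [hsplit]
    exact (norm_add_le _ _).trans (add_le_add (hB _ _) (hB _ _))
  have h2 := aux_amgm _ _ _ _ _ τ hτ (norm_nonneg _) h1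
  have tri : ∀ b b' : E, ‖(a - b) - (a' - b')‖ ^ 4 ≤ 8 * ‖a' - a‖ ^ 4 + 8 * ‖b' - b‖ ^ 4 := by
    intro b b'
    refine aux_pow4 _ _ _ (norm_nonneg _) (norm_nonneg _) (norm_nonneg _) ?_
    have : (a - b) - (a' - b') = (b' - b) - (a' - a) := by abel
    rw [this, add_comm]
    exact norm_sub_le _ _
  have e1 := tri b b'
  have e2 := tri c c'
  refine h2.trans ?_
  refine add_le_add (div_le_div_of_nonneg_right ?_ hτ.le) le_rfl
  linarith

/-- The lower integral of a square, bounded through a real integrable majorant. -/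
lemma aux_lint {Ω G : Type*} [MeasurableSpace Ω] (ℙ : Measure Ω) [NormedAddCommGroup G]
    (f : Ω → G) (g : Ω → ℝ) (hg : Integrable g ℙ) (hfg : ∀ ω, ‖f ω‖ ^ 2 ≤ g ω) (c : ℝ)
    (hc : ∫ ω, g ω ∂ℙ ≤ c) : ∫⁻ ω, ‖f ω‖ₑ ^ 2 ∂ℙ ≤ ENNReal.ofReal c := by
  have h0 : ∀ ω, 0 ≤ g ω := fun ω => le_trans (by positivity) (hfg ω)
  calc ∫⁻ ω, ‖f ω‖ₑ ^ 2 ∂ℙ ≤ ∫⁻ ω, ENNReal.ofReal (g ω) ∂ℙ := by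
        refine lintegral_mono fun ω => ?_
        rw [← ofReal_norm, ← ENNReal.ofReal_pow (norm_nonneg _)]
        exact ENNReal.ofReal_le_ofReal (hfg ω)
    _ = ENNReal.ofReal (∫ ω, g ω ∂ℙ) :=
        (ofReal_integral_eq_lintegral_ofReal hg (Filter.Eventually.of_forall h0)).symm
    _ ≤ _ := ENNReal.ofReal_le_ofReal hc

lemma aux_real {Ω G : Type*} [MeasurableSpace Ω] (ℙ : Measure Ω) [NormedAddCommGroup G]
    (f : Ω → G) (c : ℝ) (hc0 : 0 ≤ c)
    (hc : ∫⁻ ω, ‖f ω‖ₑ ^ 2 ∂ℙ ≤ ENNReal.ofReal c) : ∫ ω, ‖f ω‖ ^ 2 ∂ℙ ≤ c := by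
  by_cases hi : Integrable (fun ω => ‖f ω‖ ^ 2) ℙ
  · have h1 := ofReal_integral_eq_lintegral_ofReal hi
      (Filter.Eventually.of_forall fun ω => by positivity)
    rw [← ENNReal.ofReal_le_ofReal_iff hc0, h1]
    refine le_trans (le_of_eq ?_) hc
    refine lintegral_congr fun ω => ?_
    rw [← ofReal_norm, ← ENNReal.ofReal_pow (norm_nonneg _)]
  · rw [integral_undef hi]
    exact hc0

/-- Iterated interval integrals as an integral over the product measure. -/
lemma aux_triple {G : Type*} [NormedAddCommGroup G] [NormedSpace ℝ G]
    (τ : ℝ) (hτ : 0 ≤ τ) (F : ℝ × ℝ × ℝ → G)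
    (hF : Integrable F ((volume.restrict (Ioc 0 τ)).prod
      ((volume.restrict (Ioc 0 τ)).prod (volume.restrict (Ioc 0 τ))))) :
    ∫ t in (0 : ℝ)..τ, ∫ s in (0 : ℝ)..τ, ∫ r in (0 : ℝ)..τ, F (t, s, r) =
      ∫ p, F p ∂((volume.restrict (Ioc 0 τ)).prod
      ((volume.restrict (Ioc 0 τ)).prod (volume.restrict (Ioc 0 τ)))) := by
  simp only [integral_of_le hτ]
  rw [integral_prod _ hF]
  refine integral_congr_ae ?_
  filter_upwards [hF.prod_right_ae] with t ht
  rw [integral_prod _ ht]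

lemma aux_meas {Ω E G : Type*} [MeasurableSpace Ω] [NormedAddCommGroup E] [NormedSpace ℝ E]
    [NormedAddCommGroup G] [NormedSpace ℝ G]
    (B : E →ₗ[ℝ] E →ₗ[ℝ] G) (hB : ∀ u v, ‖B u v‖ ≤ ‖u‖ * ‖v‖)
    (Z : ℝ → Ω → E) (hZ : StronglyMeasurable (fun p : ℝ × Ω => Z p.1 p.2)) :
    StronglyMeasurable (fun q : (ℝ × ℝ × ℝ) × Ω =>
      B (Z q.1.1 q.2 - Z q.1.2.1 q.2) (Z q.1.1 q.2 - Z q.1.2.2 q.2)) := by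
  let B' : E →L[ℝ] E →L[ℝ] G := B.mkContinuous₂ 1 (by simpa using hB)
  have hcont : Continuous (fun p : E × E => B p.1 p.2) := by
    have : (fun p : E × E => B p.1 p.2) = fun p : E × E => B' p.1 p.2 := rfl
    rw [this]
    fun_prop
  have m1 : StronglyMeasurable (fun q : (ℝ × ℝ × ℝ) × Ω => Z q.1.1 q.2) :=
    hZ.comp_measurable (g := fun q : (ℝ × ℝ × ℝ) × Ω => (q.1.1, q.2)) (by fun_prop)
  have m2 : StronglyMeasurable (fun q : (ℝ × ℝ × ℝ) × Ω => Z q.1.2.1 q.2) :=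
    hZ.comp_measurable (g := fun q : (ℝ × ℝ × ℝ) × Ω => (q.1.2.1, q.2)) (by fun_prop)
  have m3 : StronglyMeasurable (fun q : (ℝ × ℝ × ℝ) × Ω => Z q.1.2.2 q.2) :=
    hZ.comp_measurable (g := fun q : (ℝ × ℝ × ℝ) × Ω => (q.1.2.2, q.2)) (by fun_prop)
  exact hcont.comp_stronglyMeasurable ((m1.sub m2).prodMk (m1.sub m3))

/-- Comparison of the triple integral of `Z` with that of `Z ∘ n`. -/
lemma aux_main {Ω : Type*} [MeasurableSpace Ω] (ℙ : Measure Ω) [IsProbabilityMeasure ℙ]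
    {E G : Type*} [NormedAddCommGroup E] [NormedSpace ℝ E]
    [NormedAddCommGroup G] [NormedSpace ℝ G]
    (C : ℝ) (B : E →ₗ[ℝ] E →ₗ[ℝ] G) (hB : ∀ u v, ‖B u v‖ ≤ ‖u‖ * ‖v‖)
    (Z : ℝ → Ω → E) (hZ : StronglyMeasurable (fun p : ℝ × Ω => Z p.1 p.2))
    (τ : ℝ) (hτ : 0 < τ)
    (hI : ∀ t ∈ Icc (0 : ℝ) τ, Integrable (fun ω => ‖Z t ω‖ ^ 4) ℙ)
    (hinc : ∀ s ∈ Icc (0 : ℝ) τ, ∀ t ∈ Icc (0 : ℝ) τ,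
          ∫ ω, ‖Z t ω - Z s ω‖ ^ 4 ∂ℙ ≤ C ^ 2 * |t - s| ^ 2)
    (n : ℝ → ℝ) (hn : Measurable n) (hn1 : ∀ t ∈ Ioc (0 : ℝ) τ, n t ∈ Icc (0 : ℝ) τ)
    (hn2 : ∀ t ∈ Ioc (0 : ℝ) τ, |n t - t| ≤ τ ^ 2) :
    ∫ ω, ‖(∫ t in (0 : ℝ)..τ, ∫ s in (0 : ℝ)..τ, ∫ r in (0 : ℝ)..τ,
                B (Z t ω - Z s ω) (Z t ω - Z r ω)) -
          (∫ t in (0 : ℝ)..τ, ∫ s in (0 : ℝ)..τ, ∫ r in (0 : ℝ)..τ,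
                B (Z (n t) ω - Z (n s) ω) (Z (n t) ω - Z (n r) ω))‖ ^ 2 ∂ℙ
      ≤ 34 * C ^ 2 * τ ^ 9 := by
  set μ : Measure ℝ := volume.restrict (Ioc 0 τ) with hμ
  set ν : Measure (ℝ × ℝ × ℝ) := μ.prod (μ.prod μ) with hν
  have hμu : μ univ = ENNReal.ofReal τ := by simp [hμ]
  have hνu : ν univ = ENNReal.ofReal (τ ^ 3) := by
    rw [hν, ← univ_prod_univ, Measure.prod_prod, ← univ_prod_univ, Measure.prod_prod, hμu,
      ENNReal.ofReal_pow hτ.le]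
    ring
  have hmem : ∀ᵐ p ∂ν, p.1 ∈ Ioc 0 τ ∧ p.2.1 ∈ Ioc 0 τ ∧ p.2.2 ∈ Ioc 0 τ := by
    rw [hν, hμ, Measure.prod_restrict, Measure.prod_restrict]
    filter_upwards [ae_restrict_mem
      (measurableSet_Ioc.prod (measurableSet_Ioc.prod measurableSet_Ioc))] with p hp
    exact ⟨hp.1, hp.2.1, hp.2.2⟩
  -- integrability of fourth powers of increments
  have hZs : ∀ t, StronglyMeasurable (Z t) := fun t =>
    hZ.comp_measurable (g := fun ω => (t, ω)) measurable_prodMk_left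
  have hD : ∀ s ∈ Icc (0 : ℝ) τ, ∀ t ∈ Icc (0 : ℝ) τ,
      Integrable (fun ω => ‖Z t ω - Z s ω‖ ^ 4) ℙ := by
    intro s hs t ht
    refine (((hI t ht).const_mul 8).add ((hI s hs).const_mul 8)).mono'
      (((hZs t).sub (hZs s)).norm.pow 4).aestronglyMeasurable ?_
    refine Filter.Eventually.of_forall fun ω => ?_
    simp only [Real.norm_eq_abs]
    rw [abs_of_nonneg (by positivity)]
    exact aux_pow4 _ _ _ (norm_nonneg _) (norm_nonneg _) (norm_nonneg _) (norm_sub_le _ _)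
  have hDτ : ∀ s ∈ Icc (0 : ℝ) τ, ∀ t ∈ Icc (0 : ℝ) τ,
      ∫ ω, ‖Z t ω - Z s ω‖ ^ 4 ∂ℙ ≤ C ^ 2 * τ ^ 2 := by
    intro s hs t ht
    refine (hinc s hs t ht).trans ?_
    have : |t - s| ≤ τ := by
      rw [abs_le]; constructor <;> linarith [hs.1, hs.2, ht.1, ht.2]
    gcongr
  have hDh : ∀ t ∈ Ioc (0 : ℝ) τ,
      ∫ ω, ‖Z (n t) ω - Z t ω‖ ^ 4 ∂ℙ ≤ C ^ 2 * τ ^ 4 := by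
    intro t ht
    refine (hinc t (Ioc_subset_Icc_self ht) (n t) (hn1 t ht)).trans ?_
    have h1 : |n t - t| ^ 2 ≤ (τ ^ 2) ^ 2 := by
      have := hn2 t ht
      gcongr
    calc C ^ 2 * |n t - t| ^ 2 ≤ C ^ 2 * (τ ^ 2) ^ 2 := by gcongr
      _ = _ := by ring
  let F : (ℝ × ℝ × ℝ) × Ω → G := fun q =>
      B (Z q.1.1 q.2 - Z q.1.2.1 q.2) (Z q.1.1 q.2 - Z q.1.2.2 q.2)
  let H : (ℝ × ℝ × ℝ) × Ω → G := fun q =>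
      B (Z (n q.1.1) q.2 - Z (n q.1.2.1) q.2) (Z (n q.1.1) q.2 - Z (n q.1.2.2) q.2)
  have hFm : StronglyMeasurable F := aux_meas B hB Z hZ
  have hHm : StronglyMeasurable H := aux_meas B hB (fun t => Z (n t))
    (hZ.comp_measurable (g := fun p : ℝ × Ω => (n p.1, p.2)) (by fun_prop))
  have hcrude : ∀ t ∈ Icc (0 : ℝ) τ, ∀ s ∈ Icc (0 : ℝ) τ, ∀ r ∈ Icc (0 : ℝ) τ,
      ∫⁻ ω, ‖B (Z t ω - Z s ω) (Z t ω - Z r ω)‖ₑ ^ 2 ∂ℙ ≤ ENNReal.ofReal (2 * (C ^ 2 * τ ^ 2)) := by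
    intro t ht s hs r hr
    refine aux_lint ℙ _ (fun ω => ‖Z t ω - Z s ω‖ ^ 4 + ‖Z t ω - Z r ω‖ ^ 4)
      ((hD s hs t ht).add (hD r hr t ht)) ?_ _ ?_
    · intro ω
      have h1 : ‖B (Z t ω - Z s ω) (Z t ω - Z r ω)‖ ^ 2 ≤
        (‖Z t ω - Z s ω‖ * ‖Z t ω - Z r ω‖) ^ 2 := by
        have := hB (Z t ω - Z s ω) (Z t ω - Z r ω)
        gcongr
      nlinarith [sq_nonneg (‖Z t ω - Z s ω‖ ^ 2 - ‖Z t ω - Z r ω‖ ^ 2),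
        sq_nonneg (‖Z t ω - Z s ω‖ ^ 2 + ‖Z t ω - Z r ω‖ ^ 2)]
    · rw [integral_add (hD s hs t ht) (hD r hr t ht)]
      linarith [hDτ s hs t ht, hDτ r hr t ht]
  have hFi := (aux_moment ν ℙ F hFm _ ENNReal.ofReal_ne_top (by
    filter_upwards [hmem] with p hp
    exact hcrude _ (Ioc_subset_Icc_self hp.1) _ (Ioc_subset_Icc_self hp.2.1) _
      (Ioc_subset_Icc_self hp.2.2))).1
  have hHi := (aux_moment ν ℙ H hHm _ ENNReal.ofReal_ne_top (by
    filter_upwards [hmem] with p hp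
    exact hcrude _ (hn1 _ hp.1) _ (hn1 _ hp.2.1) _ (hn1 _ hp.2.2))).1
  have hFH := (aux_moment ν ℙ (fun q => F q - H q) (hFm.sub hHm)
    (ENNReal.ofReal (34 * C ^ 2 * τ ^ 3)) ENNReal.ofReal_ne_top (by
    filter_upwards [hmem] with p hp
    obtain ⟨t, s, r⟩ := p
    obtain ⟨ht, hs, hr⟩ := hp
    simp only at ht hs hr
    have ht' := Ioc_subset_Icc_self ht
    have hs' := Ioc_subset_Icc_self hs
    have hr' := Ioc_subset_Icc_self hr
    have i1 := hD t ht' (n t) (hn1 t ht)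
    have i2 := hD s hs' (n s) (hn1 s hs)
    have i3 := hD r hr' (n r) (hn1 r hr)
    have i4 := hD r hr' t ht'
    have i5 := hD (n s) (hn1 s hs) (n t) (hn1 t ht)
    have j0 : Integrable (fun ω => 16 * ‖Z (n t) ω - Z t ω‖ ^ 4 + 8 * ‖Z (n s) ω - Z s ω‖ ^ 4) ℙ :=
      (i1.const_mul 16).add (i2.const_mul 8)
    have j1 : Integrable (fun ω => 16 * ‖Z (n t) ω - Z t ω‖ ^ 4 + 8 * ‖Z (n s) ω - Z s ω‖ ^ 4
        + 8 * ‖Z (n r) ω - Z r ω‖ ^ 4) ℙ := ((i1.const_mul 16).add (i2.const_mul 8)).add (i3.const_mul 8)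
    have j2 : Integrable (fun ω => ‖Z t ω - Z r ω‖ ^ 4 + ‖Z (n t) ω - Z (n s) ω‖ ^ 4) ℙ := (i4.add i5)
    refine aux_lint ℙ _ (fun ω => (16 * ‖Z (n t) ω - Z t ω‖ ^ 4 + 8 * ‖Z (n s) ω - Z s ω‖ ^ 4
        + 8 * ‖Z (n r) ω - Z r ω‖ ^ 4) / τ
        + τ * (‖Z t ω - Z r ω‖ ^ 4 + ‖Z (n t) ω - Z (n s) ω‖ ^ 4))
        ((j1.div_const τ).add (j2.const_mul τ)) ?_ _ ?_
    · intro ω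
      exact aux_B B hB τ hτ _ _ _ _ _ _
    · have e1 : ∫ ω, (16 * ‖Z (n t) ω - Z t ω‖ ^ 4 + 8 * ‖Z (n s) ω - Z s ω‖ ^ 4
          + 8 * ‖Z (n r) ω - Z r ω‖ ^ 4) ∂ℙ ≤ 32 * (C ^ 2 * τ ^ 4) := by
        rw [integral_add j0 (i3.const_mul 8),
          integral_add (i1.const_mul 16) (i2.const_mul 8), MeasureTheory.integral_const_mul, MeasureTheory.integral_const_mul,
          MeasureTheory.integral_const_mul]
        linarith [hDh t ht, hDh s hs, hDh r hr]
      have e2 : ∫ ω, (‖Z t ω - Z r ω‖ ^ 4 + ‖Z (n t) ω - Z (n s) ω‖ ^ 4) ∂ℙ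
          ≤ 2 * (C ^ 2 * τ ^ 2) := by
        rw [integral_add i4 i5]
        linarith [hDτ r hr' t ht', hDτ (n s) (hn1 s hs) (n t) (hn1 t ht)]
      rw [integral_add (j1.div_const τ) (j2.const_mul τ), MeasureTheory.integral_const_mul]
      have e3 := MeasureTheory.integral_div (μ := ℙ) τ (fun ω => 16 * ‖Z (n t) ω - Z t ω‖ ^ 4
        + 8 * ‖Z (n s) ω - Z s ω‖ ^ 4 + 8 * ‖Z (n r) ω - Z r ω‖ ^ 4)
      refine (add_le_add (e3.le.trans (div_le_div_of_nonneg_right e1 hτ.le))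
        (mul_le_mul_of_nonneg_left e2 hτ.le)).trans (le_of_eq ?_)
      field_simp
      ring)).2
  refine aux_real ℙ _ _ (by positivity) ?_
  have hfinal : ν univ ^ 2 * ENNReal.ofReal (34 * C ^ 2 * τ ^ 3)
      = ENNReal.ofReal (34 * C ^ 2 * τ ^ 9) := by
    rw [hνu, ← ENNReal.ofReal_pow (by positivity), ← ENNReal.ofReal_mul (by positivity)]
    congr 1
    ring
  rw [← hfinal]
  refine le_trans (le_of_eq ?_) hFH
  refine lintegral_congr_ae ?_
  filter_upwards [hFi, hHi] with ω h1 h2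
  have t1 := aux_triple τ hτ.le (fun p => F (p, ω)) h1
  have t2 := aux_triple τ hτ.le (fun p => H (p, ω)) h2
  rw [integral_sub h1 h2, ← t1, ← t2]

/-- Approximation of the matrix-valued Brownian triple integral by its
fine-mesh triple Riemann sum: with `τ = 1/M`, `h = τ²`,
`𝐁 = ∫_0^τ ∫_0^τ ∫_0^τ B(Z(t)-Z(s), Z(t)-Z(r)) ds dt dr` and
`𝐁^disc = h³ Σ_{ℓ,k,j=1}^M B(Z(ℓh)-Z(kh), Z(ℓh)-Z(jh))`, one has
`𝔼‖𝐁 - 𝐁^disc‖² ≤ K τ⁹`, equivalently `𝔼‖τ⁻³𝐁 - τ⁻³𝐁^disc‖² ≤ K τ³`, with `K`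
depending only on `C`. -/
theorem brownian_triple_integral_riemann_sum_error
    {Ω : Type*} [MeasurableSpace Ω] (ℙ : Measure Ω) [IsProbabilityMeasure ℙ]
    {E G : Type*} [NormedAddCommGroup E] [NormedSpace ℝ E] [CompleteSpace E]
    [NormedAddCommGroup G] [NormedSpace ℝ G] [CompleteSpace G]
    (C : ℝ) (hC : 0 ≤ C) :
    ∃ K : ℝ, 0 < K ∧
      ∀ (M : ℕ), 0 < M →
      ∀ (B : E →ₗ[ℝ] E →ₗ[ℝ] G), (∀ u v, ‖B u v‖ ≤ ‖u‖ * ‖v‖) →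
      ∀ (Z : ℝ → Ω → E),
        StronglyMeasurable (fun p : ℝ × Ω => Z p.1 p.2) →
      ∀ (τ h : ℝ), τ = 1 / (M : ℝ) → h = τ ^ 2 →
        (∀ t ∈ Icc (0 : ℝ) τ, Integrable (fun ω => ‖Z t ω‖ ^ 4) ℙ) →
        (∀ s ∈ Icc (0 : ℝ) τ, ∀ t ∈ Icc (0 : ℝ) τ,
          ∫ ω, ‖Z t ω - Z s ω‖ ^ 4 ∂ℙ ≤ C ^ 2 * |t - s| ^ 2) →
        (∫ ω, ‖(∫ t in (0 : ℝ)..τ, ∫ s in (0 : ℝ)..τ, ∫ r in (0 : ℝ)..τ,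
                B (Z t ω - Z s ω) (Z t ω - Z r ω))
            - h ^ 3 • ∑ ℓ ∈ Finset.Icc 1 M, ∑ k ∈ Finset.Icc 1 M, ∑ j ∈ Finset.Icc 1 M,
                B (Z (ℓ * h) ω - Z (k * h) ω) (Z (ℓ * h) ω - Z (j * h) ω)‖ ^ 2 ∂ℙ)
          ≤ K * τ ^ 9
        ∧ (∫ ω, ‖τ ^ (-3 : ℤ) • (∫ t in (0 : ℝ)..τ, ∫ s in (0 : ℝ)..τ, ∫ r in (0 : ℝ)..τ,
                B (Z t ω - Z s ω) (Z t ω - Z r ω))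
            - τ ^ (-3 : ℤ) • h ^ 3 •
                ∑ ℓ ∈ Finset.Icc 1 M, ∑ k ∈ Finset.Icc 1 M, ∑ j ∈ Finset.Icc 1 M,
                  B (Z (ℓ * h) ω - Z (k * h) ω) (Z (ℓ * h) ω - Z (j * h) ω)‖ ^ 2 ∂ℙ)
          ≤ K * τ ^ 3 := by
  refine ⟨34 * C ^ 2 + 1, by positivity, ?_⟩
  intro M hM B hB Z hZ τ h hτM hh hI hinc
  have hMpos : (0 : ℝ) < M := by exact_mod_cast hM
  have hτ : 0 < τ := by rw [hτM]; positivity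
  have hhpos : 0 < h := by rw [hh]; positivity
  have hMh : (M : ℝ) * h = τ := by
    rw [hh, hτM]
    field_simp
  have hdisc : ∀ ω, h ^ 3 • ∑ ℓ ∈ Finset.Icc 1 M, ∑ k ∈ Finset.Icc 1 M, ∑ j ∈ Finset.Icc 1 M,
      B (Z (ℓ * h) ω - Z (k * h) ω) (Z (ℓ * h) ω - Z (j * h) ω) =
      ∫ t in (0 : ℝ)..τ, ∫ s in (0 : ℝ)..τ, ∫ r in (0 : ℝ)..τ,
        B (Z ((⌈t / h⌉₊ : ℝ) * h) ω - Z ((⌈s / h⌉₊ : ℝ) * h) ω)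
          (Z ((⌈t / h⌉₊ : ℝ) * h) ω - Z ((⌈r / h⌉₊ : ℝ) * h) ω) := by
    intro ω
    rw [← hMh]
    have a1 : ∀ x y : ℝ, ∫ r in (0 : ℝ)..(M * h), B (Z x ω - Z y ω)
          (Z x ω - Z ((⌈r / h⌉₊ : ℝ) * h) ω) = h • ∑ j ∈ Finset.Icc 1 M,
          B (Z x ω - Z y ω) (Z x ω - Z (j * h) ω) := fun x y =>
      aux_step (fun z => B (Z x ω - Z y ω) (Z x ω - Z z ω)) h hhpos M
    simp only [a1]
    have a2 : ∀ x : ℝ, ∫ s in (0 : ℝ)..(M * h), h • ∑ j ∈ Finset.Icc 1 M,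
          B (Z x ω - Z ((⌈s / h⌉₊ : ℝ) * h) ω) (Z x ω - Z (j * h) ω) =
          h • ∑ k ∈ Finset.Icc 1 M, h • ∑ j ∈ Finset.Icc 1 M,
          B (Z x ω - Z (k * h) ω) (Z x ω - Z (j * h) ω) := fun x =>
      aux_step (fun y => h • ∑ j ∈ Finset.Icc 1 M,
          B (Z x ω - Z y ω) (Z x ω - Z (j * h) ω)) h hhpos M
    simp only [a2]
    rw [aux_step (fun x => h • ∑ k ∈ Finset.Icc 1 M, h • ∑ j ∈ Finset.Icc 1 M,
          B (Z x ω - Z (k * h) ω) (Z x ω - Z (j * h) ω)) h hhpos M]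
    simp only [← Finset.smul_sum, smul_smul]
    congr 1
    ring
  have hceil : ∀ t ∈ Ioc (0 : ℝ) τ, t ≤ (⌈t / h⌉₊ : ℝ) * h ∧ (⌈t / h⌉₊ : ℝ) * h ≤ t + h ∧
      (⌈t / h⌉₊ : ℝ) * h ≤ τ := by
    intro t ht
    have h1 := Nat.le_ceil (t / h)
    have h2 := Nat.ceil_lt_add_one (div_nonneg ht.1.le hhpos.le)
    have h3 : ⌈t / h⌉₊ ≤ M := by
      rw [Nat.ceil_le, div_le_iff₀ hhpos, hMh]
      exact ht.2
    refine ⟨(div_le_iff₀ hhpos).1 h1, ?_, ?_⟩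
    · have := mul_le_mul_of_nonneg_right h2.le hhpos.le
      rwa [add_mul, div_mul_cancel₀ _ hhpos.ne', one_mul] at this
    · rw [← hMh]
      have : (⌈t / h⌉₊ : ℝ) ≤ M := by exact_mod_cast h3
      gcongr
  have main := aux_main ℙ C B hB Z hZ τ hτ hI hinc (fun t => (⌈t / h⌉₊ : ℝ) * h)
    (by
      have : Measurable (fun t : ℝ => (⌈t / h⌉₊ : ℝ)) :=
        (measurable_from_top (f := fun k : ℕ => (k : ℝ))).comp
          (Nat.measurable_ceil.comp (measurable_id.div_const h))
      exact this.mul_const h)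
    (fun t ht => ⟨ht.1.le.trans (hceil t ht).1, (hceil t ht).2.2⟩)
    (fun t ht => by
      rw [← hh, abs_le]
      constructor <;> linarith [(hceil t ht).1, (hceil t ht).2.1])
  simp only [← hdisc] at main
  have hfirst := main.trans (show 34 * C ^ 2 * τ ^ 9 ≤ (34 * C ^ 2 + 1) * τ ^ 9 by
    gcongr; linarith)
  refine ⟨hfirst, ?_⟩
  simp only [← smul_sub, norm_smul, mul_pow]
  rw [MeasureTheory.integral_const_mul]
  refine (mul_le_mul_of_nonneg_left hfirst (by positivity)).trans (le_of_eq ?_)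
  rw [Real.norm_eq_abs, sq_abs, zpow_neg]
  have : (τ ^ (3 : ℤ)) = τ ^ 3 := by norm_cast
  rw [this]
  field_simp
end
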